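/- arXiv:math/0111147 — 2 statements merged into one kernel-verified Lean document; each statement's English description precedes it below -/
import Mathlib

section
/- Let h : W → T be a morphism of irreducible varieties over ℂ with W normal. Then a general fibre of h is normal: there exists a dense open subset U ⊆ T such that for every t ∈ U the fibre h^{-1}(t) is a normal scheme. -/
open AlgebraicGeometry CategoryTheory Limits

noncomputable section

/-- A scheme is normal if all of its local rings (stalks) are integrally closed
domains. -/
def IsNormalScheme (X : Scheme) : Prop :=
  ∀ x : X, IsDomain (X.presheaf.stalk x) ∧ IsIntegrallyClosed (X.presheaf.stalk x)

/-! By generic smoothness, `W` is smooth over `T` near the generic fibre away from a hypersurface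
`f = 0` of an affine chart `Spec B`. With `J = √(f)`, the Grauert–Remmert criterion says that the
remaining part of normality, that `B` is integrally closed in `B_f`, follows from three
ideal-theoretic conditions: `f` is regular, `J` is radical, and `(fJ : J) ⊆ (f)`. By generic
flatness such conditions pass from `B` to its general fibres, where they give back normality.
-/

open TensorProduct Topology Filter

universe u

section Flat

variable {A : Type*} [CommRing A]

lemma flat_of_exact {M M' M'' : Type*} [AddCommGroup M] [AddCommGroup M'] [AddCommGroup M'']
    [Module A M] [Module A M'] [Module A M''] [Module.Flat A M'] [Module.Flat A M'']
    {f : M' →ₗ[A] M} {g : M →ₗ[A] M''} (hf : Function.Injective f) (hg : Function.Surjective g)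
    (hfg : Function.Exact f g) : Module.Flat A M := by
  rw [Module.Flat.iff_rTensor_preserves_injective_linearMap]
  intro N N' _ _ _ _ i hi
  rw [injective_iff_map_eq_zero]
  intro x hx
  have hx'' : g.lTensor N x = 0 := by
    apply Module.Flat.rTensor_preserves_injective_linearMap (M := M'') i hi
    rw [map_zero, ← LinearMap.comp_apply, LinearMap.rTensor_comp_lTensor,
      ← LinearMap.lTensor_comp_rTensor, LinearMap.comp_apply, hx, map_zero]
  obtain ⟨y, rfl⟩ := (lTensor_exact N hfg hg x).1 hx''
  suffices y = 0 by rw [this, map_zero]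
  apply Module.Flat.rTensor_preserves_injective_linearMap (M := M') i hi
  apply LinearMap.lTensor_injective_of_exact_of_flat g hg f hf hfg N'
  rw [map_zero, map_zero, ← hx, ← LinearMap.comp_apply, ← LinearMap.comp_apply,
    LinearMap.lTensor_comp_rTensor, LinearMap.rTensor_comp_lTensor]

lemma rTensor_lsmul {D M : Type*} (N : Type*) [CommRing D] [Algebra A D] [AddCommGroup M]
    [Module A M] [Module D M] [IsScalarTower A D M] [AddCommGroup N] [Module A N] (f : D) :
    AlgebraTensorModule.rTensor A N (LinearMap.lsmul D M f) = LinearMap.lsmul D (M ⊗[A] N) f := by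
  ext
  rfl

lemma flat_of_flat_localizedModule_of_flat_quotient {D M M' Q : Type*} [CommRing D] [Algebra A D]
    [AddCommGroup M] [Module A M] [Module D M] [IsScalarTower A D M]
    [AddCommGroup M'] [Module A M'] [Module D M'] [IsScalarTower A D M']
    [AddCommGroup Q] [Module A Q] [Module D Q] [IsScalarTower A D Q]
    {f : D} (hf : IsSMulRegular M f)
    (l : M →ₗ[D] M') [IsLocalizedModule (Submonoid.powers f) l] [Module.Flat A M']
    {π : M →ₗ[D] Q} (hπ : Function.Surjective π)
    (hfπ : Function.Exact (LinearMap.lsmul D M f) π) [Module.Flat A Q] : Module.Flat A M := by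
  rw [Module.Flat.iff_lTensor_preserves_injective_linearMap]
  intro N N' _ _ _ _ i hi
  rw [injective_iff_map_eq_zero]
  intro x hx
  have hlx : AlgebraTensorModule.rTensor A N l x = 0 := by
    apply Module.Flat.lTensor_preserves_injective_linearMap (M := M') i hi
    rw [map_zero, ← map_zero (AlgebraTensorModule.rTensor A N' l), ← hx]
    exact LinearMap.congr_fun ((LinearMap.lTensor_comp_rTensor _ (l.restrictScalars A) i).trans
      (LinearMap.rTensor_comp_lTensor _ (l.restrictScalars A) i).symm) x
  obtain ⟨⟨_, n, rfl⟩, hn⟩ := (IsLocalizedModule.eq_zero_iff (Submonoid.powers f) _).1 hlx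
  have hfN : IsSMulRegular (M ⊗[A] N) f := by
    have := LinearMap.lTensor_injective_of_exact_of_flat (π.restrictScalars A) hπ
      ((LinearMap.lsmul D M f).restrictScalars A) hf hfπ N
    rw [LinearMap.lTensor_inj_iff_rTensor_inj] at this
    change Function.Injective (LinearMap.lsmul D (M ⊗[A] N) f)
    rwa [← rTensor_lsmul]
  exact (hfN.pow n).right_eq_zero_of_smul hn

end Flat

section FlatAt

variable {A : Type*} [CommRing A]

/-- Flatness of an `A`-module at a prime of `A`. Keeping `M` as the left factor of the
localization `M ⊗ A_p` lets a ring acting on `M` act on it too. -/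
def FlatAt (p : PrimeSpectrum A) (M : Type*) [AddCommGroup M] [Module A M] : Prop :=
  Module.Flat A (M ⊗[A] Localization.AtPrime p.asIdeal)

variable {p : PrimeSpectrum A}

lemma FlatAt.of_flat {M : Type*} [AddCommGroup M] [Module A M] [Module.Flat A M] : FlatAt p M :=
  inferInstanceAs (Module.Flat A (M ⊗[A] Localization.AtPrime p.asIdeal))

lemma FlatAt.of_smul_eq_zero {M : Type*} [AddCommGroup M] [Module A M] {a : A}
    (ha : a ∉ p.asIdeal) (haM : ∀ m : M, a • m = 0) : FlatAt p M := by
  have hu := IsLocalization.map_units (Localization.AtPrime p.asIdeal)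
    (⟨a, ha⟩ : p.asIdeal.primeCompl)
  have : Subsingleton (M ⊗[A] Localization.AtPrime p.asIdeal) := by
    refine subsingleton_of_forall_eq 0 fun x ↦ ?_
    induction x with
    | zero => rfl
    | add x y hx hy => rw [hx, hy, add_zero]
    | tmul m s =>
      obtain ⟨t, rfl⟩ := hu.dvd (a := s)
      rw [← Algebra.smul_def, tmul_smul, smul_tmul', haM, zero_tmul]
  exact inferInstanceAs (Module.Flat A (M ⊗[A] Localization.AtPrime p.asIdeal))

lemma FlatAt.of_exact {M M' M'' : Type*} [AddCommGroup M] [AddCommGroup M'] [AddCommGroup M'']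
    [Module A M] [Module A M'] [Module A M'']
    {f : M' →ₗ[A] M} {g : M →ₗ[A] M''} (hf : Function.Injective f) (hg : Function.Surjective g)
    (hfg : Function.Exact f g) (h' : FlatAt p M') (h'' : FlatAt p M'') : FlatAt p M :=
  have : Module.Flat A _ := h'
  have : Module.Flat A _ := h''
  flat_of_exact (f := f.rTensor _) (g := g.rTensor _)
    (Module.Flat.rTensor_preserves_injective_linearMap f hf) (LinearMap.rTensor_surjective _ hg)
    (rTensor_exact _ hfg hg)

lemma FlatAt.of_linearEquiv {M N : Type*} [AddCommGroup M] [AddCommGroup N] [Module A M]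
    [Module A N] (e : M ≃ₗ[A] N) (h : FlatAt p N) : FlatAt p M :=
  have : Module.Flat A _ := h
  Module.Flat.of_linearEquiv (e.rTensor (Localization.AtPrime p.asIdeal))

lemma FlatAt.of_flat_localizedModule_of_quotient {D M M' Q : Type*} [CommRing D] [Algebra A D]
    [AddCommGroup M] [Module A M] [Module D M] [IsScalarTower A D M]
    [AddCommGroup M'] [Module A M'] [Module D M'] [IsScalarTower A D M']
    [AddCommGroup Q] [Module A Q] [Module D Q] [IsScalarTower A D Q]
    {f : D} (hf : IsSMulRegular M f)
    (l : M →ₗ[D] M') [IsLocalizedModule (Submonoid.powers f) l] [Module.Flat A M']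
    {π : M →ₗ[D] Q} (hπ : Function.Surjective π)
    (hfπ : Function.Exact (LinearMap.lsmul D M f) π) (hQ : FlatAt p Q) : FlatAt p M := by
  let L := Localization.AtPrime p.asIdeal
  have : Module.Flat A (Q ⊗[A] L) := hQ
  refine flat_of_flat_localizedModule_of_flat_quotient (M := M ⊗[A] L) (f := f) ?_
    (AlgebraTensorModule.rTensor A L l) (π := AlgebraTensorModule.rTensor A L π)
    ?_ ?_
  · have hfL : Function.Injective (((LinearMap.lsmul D M f).restrictScalars A).rTensor L) :=
      Module.Flat.rTensor_preserves_injective_linearMap _ hf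
    change Function.Injective (LinearMap.lsmul D (M ⊗[A] L) f)
    rwa [← rTensor_lsmul]
  · exact LinearMap.rTensor_surjective L (g := π.restrictScalars A) hπ
  · rw [← rTensor_lsmul]
    exact rTensor_exact L (f := (LinearMap.lsmul D M f).restrictScalars A)
      (g := π.restrictScalars A) hfπ hπ

lemma FlatAt.of_flat_away {D : Type*} [CommRing D] [Algebra A D] {f : D}
    (hf : f ∈ nonZeroDivisors D) [Module.Flat A (Localization.Away f)]
    (h : FlatAt p (D ⧸ Ideal.span {f})) : FlatAt p D := by
  refine h.of_flat_localizedModule_of_quotient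
    (isRegular_iff_mem_nonZeroDivisors.2 hf).left.isSMulRegular
    (Algebra.linearMap D (Localization.Away f)) (Submodule.mkQ_surjective _) ?_
  rw [LinearMap.exact_iff, Submodule.ker_mkQ]
  ext x
  simp [Ideal.mem_span_singleton', mul_comm]

lemma FlatAt.lTensor_residueField_injective {M M' M'' : Type*} [AddCommGroup M] [AddCommGroup M']
    [AddCommGroup M''] [Module A M] [Module A M'] [Module A M'']
    {f : M' →ₗ[A] M} {g : M →ₗ[A] M''} (hf : Function.Injective f) (hg : Function.Surjective g)
    (hfg : Function.Exact f g) (h : FlatAt p M'') :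
    Function.Injective (f.lTensor p.asIdeal.ResidueField) := by
  have : Module.Flat A _ := h
  let L := Localization.AtPrime p.asIdeal
  let κ := p.asIdeal.ResidueField
  -- `κ(p) ⊗ -` is a retract of `κ(p) ⊗ (- ⊗ A_p)`.
  let ι' := LinearMap.lTensor κ ((TensorProduct.mk A M' L).flip 1)
  let ι := LinearMap.lTensor κ ((TensorProduct.mk A M L).flip 1)
  have hι' : Function.Injective ι' := by
    let r : κ ⊗[A] (M' ⊗[A] L) →ₗ[A] κ ⊗[A] M' :=
      LinearMap.rTensor M' (LinearMap.mul' A κ ∘ₗ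
        LinearMap.lTensor κ (IsScalarTower.toAlgHom A L κ).toLinearMap) ∘ₗ
      (TensorProduct.assoc A κ L M').symm.toLinearMap ∘ₗ
      LinearMap.lTensor κ (TensorProduct.comm A M' L).toLinearMap
    have hr : r ∘ₗ ι' = LinearMap.id := by
      ext c m
      simp [r, ι']
    exact Function.LeftInverse.injective (g := r) (DFunLike.congr_fun hr)
  have hfL : Function.Injective ((f.rTensor L).lTensor κ) :=
    LinearMap.lTensor_injective_of_exact_of_flat (g.rTensor L) (LinearMap.rTensor_surjective L hg)
      (f.rTensor L) (Module.Flat.rTensor_preserves_injective_linearMap f hf)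
      (rTensor_exact L hfg hg) κ
  have hcomm : ι ∘ₗ f.lTensor κ = (f.rTensor L).lTensor κ ∘ₗ ι' := by
    ext
    rfl
  refine Function.Injective.of_comp (f := ι) ?_
  rw [← LinearMap.coe_comp, hcomm]
  exact hfL.comp hι'

end FlatAt

section GenericFlatness

variable {A : Type*} [CommRing A] [IsDomain A]

lemma eventually_notMem_asIdeal {a : A} (ha : a ≠ 0) :
    ∀ᶠ p in 𝓝 (⊥ : PrimeSpectrum A), a ∉ p.asIdeal :=
  (PrimeSpectrum.basicOpen a).isOpen.mem_nhds ha

lemma exists_smooth_away [IsNoetherianRing A] [CharZero A] (C : Type*) [CommRing C] [IsDomain C]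
    [Algebra A C] [Algebra.FiniteType A C] [FaithfulSMul A C] :
    ∃ f : C, f ≠ 0 ∧ Algebra.Smooth A (Localization.Away f) := by
  have : Algebra.FinitePresentation A C := Algebra.FinitePresentation.of_finiteType.1 inferInstance
  let K := FractionRing A
  let L := FractionRing C
  have : FaithfulSMul A L := FaithfulSMul.trans A C L
  let : Algebra K L := FractionRing.liftAlgebra A L
  have : IsScalarTower A K L := FractionRing.isScalarTower_liftAlgebra A L
  have : CharZero K := IsFractionRing.charZero_of_isFractionRing A
  have : Algebra.EssFiniteType C L := .of_isLocalization _ (nonZeroDivisors C)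
  have : Algebra.EssFiniteType A L := .comp A C L
  have : Algebra.EssFiniteType K L := .of_comp A K L
  have : Algebra.FormallySmooth K L := .of_perfectField
  have : Algebra.FormallySmooth A K := .of_isLocalization (nonZeroDivisors A)
  have : Algebra.FormallySmooth A L := .comp A K L
  have : IsLocalization (⊥ : Ideal C).primeCompl L := by
    rw [Ideal.primeCompl_bot]
    infer_instance
  have : Algebra.IsSmoothAt A (⊥ : Ideal C) := Algebra.FormallySmooth.of_equiv
    ((IsLocalization.algEquiv (⊥ : Ideal C).primeCompl L
      (Localization.AtPrime (⊥ : Ideal C))).restrictScalars A)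
  obtain ⟨f, hf, hsmooth⟩ := Algebra.IsSmoothAt.exists_notMem_smooth A (⊥ : Ideal C)
  exact ⟨f, hf, hsmooth⟩

variable {B : Type*} [CommRing B] [Algebra A B]

lemma isOka_eventually_flatAt_quotient :
    Ideal.IsOka fun I : Ideal B ↦ ∀ᶠ p in 𝓝 (⊥ : PrimeSpectrum A), FlatAt p (B ⧸ I) where
  top := .of_forall fun _ ↦ .of_flat
  oka {I a} hsup hcolon := by
    let f : (B ⧸ I.colon (Ideal.span {a})) →ₗ[B] B ⧸ I :=
      Submodule.mapQ _ I (LinearMap.lsmul B B a) fun x hx ↦ by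
        simpa [mul_comm] using Submodule.mem_colon_span_singleton.1 hx
    let g : (B ⧸ I) →ₗ[B] B ⧸ (I ⊔ Ideal.span {a}) := Submodule.factor le_sup_left
    have hf : Function.Injective f := by
      rw [injective_iff_map_eq_zero]
      intro x hx
      obtain ⟨x, rfl⟩ := Ideal.Quotient.mk_surjective x
      rw [Ideal.Quotient.eq_zero_iff_mem, Ideal.mem_colon_span_singleton, mul_comm]
      exact Ideal.Quotient.eq_zero_iff_mem.1 hx
    have hg : Function.Surjective g := Submodule.factor_surjective le_sup_left
    have hfg : Function.Exact f g := by
      intro x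
      obtain ⟨x, rfl⟩ := Ideal.Quotient.mk_surjective x
      refine Ideal.Quotient.eq_zero_iff_mem.trans ?_
      rw [sup_comm, Ideal.mem_span_singleton_sup]
      constructor
      · rintro ⟨c, y, hy, rfl⟩
        refine ⟨Ideal.Quotient.mk _ c, Ideal.Quotient.eq.2 ?_⟩
        simpa [mul_comm] using hy
      · rintro ⟨c, hc⟩
        obtain ⟨c, rfl⟩ := Ideal.Quotient.mk_surjective c
        have hx : x - a * c ∈ I := Ideal.Quotient.eq.1 hc.symm
        exact ⟨c, x - a * c, hx, (by ring : c * a + (x - a * c) = x)⟩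
    filter_upwards [hsup, hcolon] with p hsup hcolon
    exact hcolon.of_exact (f := f.restrictScalars A) (g := g.restrictScalars A) hf hg hfg hsup

lemma eventually_flatAt_quotient_of_isPrime [IsNoetherianRing A] [CharZero A]
    [Algebra.FiniteType A B] {q : Ideal B} [q.IsPrime]
    (hq : ∀ I > q, ∀ᶠ p in 𝓝 (⊥ : PrimeSpectrum A), FlatAt p (B ⧸ I)) :
    ∀ᶠ p in 𝓝 (⊥ : PrimeSpectrum A), FlatAt p (B ⧸ q) := by
  by_cases hA : Function.Injective (algebraMap A (B ⧸ q))
  · have : FaithfulSMul A (B ⧸ q) := (faithfulSMul_iff_algebraMap_injective _ _).2 hA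
    obtain ⟨f, hf, _⟩ := exists_smooth_away (A := A) (B ⧸ q)
    obtain ⟨b, rfl⟩ := Ideal.Quotient.mk_surjective f
    have hb : q < q ⊔ Ideal.span {b} :=
      Submodule.lt_sup_iff_notMem.2 fun h ↦ hf (Ideal.Quotient.eq_zero_iff_mem.2 h)
    filter_upwards [hq _ hb] with p hp
    have e := (DoubleQuot.quotQuotEquivQuotSupₐ A q (Ideal.span {b})).toLinearEquiv
    rw [Ideal.map_span, Set.image_singleton] at e
    exact .of_flat_away (mem_nonZeroDivisors_of_ne_zero hf) (.of_linearEquiv e hp)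
  · rw [injective_iff_map_eq_zero] at hA
    push Not at hA
    obtain ⟨a, haq, ha⟩ := hA
    filter_upwards [eventually_notMem_asIdeal ha] with p hp
    exact .of_smul_eq_zero hp fun x ↦ by rw [Algebra.smul_def, haq, zero_mul]

variable [IsNoetherianRing A] [CharZero A] [Algebra.FiniteType A B]

lemma eventually_flatAt_quotient (I : Ideal B) :
    ∀ᶠ p in 𝓝 (⊥ : PrimeSpectrum A), FlatAt p (B ⧸ I) := by
  have : IsNoetherianRing B := Algebra.FiniteType.isNoetherianRing A B
  by_contra hI
  obtain ⟨q, hq⟩ := exists_maximal_of_wellFoundedGT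
    (fun I : Ideal B ↦ ¬ ∀ᶠ p in 𝓝 (⊥ : PrimeSpectrum A), FlatAt p (B ⧸ I)) ⟨I, hI⟩
  have := isOka_eventually_flatAt_quotient.isPrime_of_maximal_not hq
  exact hq.prop (eventually_flatAt_quotient_of_isPrime fun I hI ↦ not_not.1 (hq.not_prop_of_gt hI))

theorem eventually_flatAt (M : Type*) [AddCommGroup M] [Module A M] [Module B M]
    [IsScalarTower A B M] [Module.Finite B M] : ∀ᶠ p in 𝓝 (⊥ : PrimeSpectrum A), FlatAt p M := by
  have : IsNoetherianRing B := Algebra.FiniteType.isNoetherianRing A B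
  suffices h : ∀ [Module A M] [IsScalarTower A B M], ∀ᶠ p in 𝓝 (⊥ : PrimeSpectrum A), FlatAt p M by
    exact h
  refine IsNoetherianRing.induction_on_isQuotientEquivQuotientPrime B ‹_›
    (motive := fun N _ _ _ ↦ ∀ [Module A N] [IsScalarTower A B N],
      ∀ᶠ p in 𝓝 (⊥ : PrimeSpectrum A), FlatAt p N) ?_ ?_ ?_
  · intros
    exact .of_forall fun _ ↦ .of_flat
  · intro N _ _ _ q e _ _
    exact (eventually_flatAt_quotient q.asIdeal).mono fun p ↦ .of_linearEquiv (e.restrictScalars A)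
  · intro N₁ _ _ _ N₂ _ _ _ N₃ _ _ _ f g hf hg hfg h₁ h₃ _ _
    let : Module A N₁ := .compHom N₁ (algebraMap A B)
    let : Module A N₃ := .compHom N₃ (algebraMap A B)
    have : IsScalarTower A B N₁ := .of_algebraMap_smul fun _ _ ↦ rfl
    have : IsScalarTower A B N₃ := .of_algebraMap_smul fun _ _ ↦ rfl
    filter_upwards [h₁, h₃] with p h₁ h₃
    exact h₁.of_exact (f := f.restrictScalars A) (g := g.restrictScalars A) hf hg hfg h₃

lemma eventually_lTensor_residueField_injective {M M' : Type*} [AddCommGroup M] [AddCommGroup M']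
    [Module A M] [Module B M] [IsScalarTower A B M] [Module.Finite B M]
    [Module A M'] [Module B M'] [IsScalarTower A B M'] {f : M' →ₗ[B] M}
    (hf : Function.Injective f) : ∀ᶠ p in 𝓝 (⊥ : PrimeSpectrum A),
      Function.Injective ((f.restrictScalars A).lTensor p.asIdeal.ResidueField) := by
  filter_upwards [eventually_flatAt (A := A) (B := B) (M ⧸ f.range)] with p hp
  exact hp.lTensor_residueField_injective (g := f.range.mkQ.restrictScalars A) hf
    f.range.mkQ_surjective f.exact_map_mkQ_range

end GenericFlatness

section FiberIdeal

variable {A B : Type*} [CommRing A] [CommRing B] [Algebra A B]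

/-- The extension of an ideal `I` of `B` to the fibre ring `κ(p) ⊗ B`: the ideal of the fibre over
`p` of the closed subscheme cut out by `I`. -/
def fiberIdeal (p : PrimeSpectrum A) (I : Ideal B) : Ideal (p.asIdeal.Fiber B) :=
  I.map (Algebra.TensorProduct.includeRight : B →ₐ[A] p.asIdeal.Fiber B)

variable {p : PrimeSpectrum A}

lemma ker_map_mk (I : Ideal B) : RingHom.ker (Algebra.TensorProduct.map
    (.id A p.asIdeal.ResidueField) (Ideal.Quotient.mkₐ A I)) = fiberIdeal p I :=
  (Algebra.TensorProduct.lTensor_ker _ (Ideal.Quotient.mkₐ_surjective A I)).trans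
    (congrArg (Ideal.map _) (Ideal.Quotient.mkₐ_ker A I))

lemma mem_fiberIdeal_iff {I : Ideal B} {x : p.asIdeal.Fiber B} : x ∈ fiberIdeal p I ↔
    (I.mkQ.restrictScalars A).lTensor p.asIdeal.ResidueField x = 0 := by
  rw [← ker_map_mk]
  exact RingHom.mem_ker

lemma isRadical_fiberIdeal {I : Ideal B} [_root_.IsReduced (p.asIdeal.Fiber (B ⧸ I))] :
    (fiberIdeal p I).IsRadical := by
  rintro x ⟨n, hx⟩
  rw [← ker_map_mk, RingHom.mem_ker] at hx ⊢
  rw [map_pow] at hx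
  exact eq_zero_of_pow_eq_zero hx

lemma one_tmul_mem_fiberIdeal {I : Ideal B} {b : B} (hb : b ∈ I) :
    (1 ⊗ₜ b : p.asIdeal.Fiber B) ∈ fiberIdeal p I :=
  Ideal.mem_map_of_mem _ hb

lemma fiberIdeal_mono {I J : Ideal B} (h : I ≤ J) : fiberIdeal p I ≤ fiberIdeal p J :=
  Ideal.map_mono h

lemma fiberIdeal_bot : fiberIdeal p (⊥ : Ideal B) = ⊥ :=
  Ideal.map_bot

lemma fiberIdeal_span_singleton (b : B) :
    fiberIdeal p (Ideal.span {b}) = Ideal.span {(1 ⊗ₜ b : p.asIdeal.Fiber B)} := by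
  rw [fiberIdeal, Ideal.map_span, Set.image_singleton, Algebra.TensorProduct.includeRight_apply]

lemma fiberIdeal_mul (I J : Ideal B) : fiberIdeal p (I * J) = fiberIdeal p I * fiberIdeal p J :=
  Ideal.map_mul _ I J

lemma fiberIdeal_pow (I : Ideal B) (n : ℕ) : fiberIdeal p (I ^ n) = fiberIdeal p I ^ n :=
  Ideal.map_pow _ I n

variable [IsDomain A] [IsNoetherianRing A] [CharZero A] [Algebra.FiniteType A B]

lemma eventually_mem_fiberIdeal_of_forall_mul_mem {ι : Type*} [Finite ι] {I : Ideal B}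
    {J : ι → Ideal B} {g : ι → B} (h : ∀ x, (∀ i, x * g i ∈ J i) → x ∈ I) :
    ∀ᶠ p in 𝓝 (⊥ : PrimeSpectrum A), ∀ x : p.asIdeal.Fiber B,
      (∀ i, x * (1 ⊗ₜ g i) ∈ fiberIdeal p (J i)) → x ∈ fiberIdeal p I := by
  cases nonempty_fintype ι
  classical
  let φ : B →ₗ[B] ∀ i, B ⧸ J i :=
    LinearMap.pi fun i ↦ (J i).mkQ ∘ₗ LinearMap.toSpanSingleton B B (g i)
  have hφI : φ.ker ≤ I := fun x hx ↦
    h x fun i ↦ Ideal.Quotient.eq_zero_iff_mem.1 (congrFun hx i)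
  have hφ : Function.Injective (φ.ker.liftQ φ le_rfl) :=
    LinearMap.ker_eq_bot.1 (φ.ker.ker_liftQ_eq_bot φ le_rfl le_rfl)
  filter_upwards [eventually_lTensor_residueField_injective (A := A) hφ] with p hp x hx
  let κ := p.asIdeal.ResidueField
  have hφx : (φ.restrictScalars A).lTensor κ x = 0 := by
    apply (piRight A A κ fun i ↦ B ⧸ J i).injective
    ext i
    rw [map_zero, Pi.zero_apply, ← mem_fiberIdeal_iff.1 (hx i)]
    clear hx
    induction x using TensorProduct.induction_on with
    | zero => simp only [map_zero, Pi.zero_apply, zero_mul]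
    | add x y hx hy => simp only [map_add, Pi.add_apply, add_mul, hx, hy]
    | tmul c b =>
      rw [Algebra.TensorProduct.tmul_mul_tmul, mul_one]
      rfl
  refine fiberIdeal_mono hφI (mem_fiberIdeal_iff.2 (hp ?_))
  rw [map_zero, ← hφx, ← LinearMap.comp_apply, ← LinearMap.lTensor_comp]
  rfl

lemma eventually_one_tmul_mem_nonZeroDivisors {f : B} (hf : f ∈ nonZeroDivisors B) :
    ∀ᶠ p in 𝓝 (⊥ : PrimeSpectrum A), (1 ⊗ₜ f : p.asIdeal.Fiber B) ∈
      nonZeroDivisors (p.asIdeal.Fiber B) := by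
  have h := eventually_mem_fiberIdeal_of_forall_mul_mem (A := A) (ι := Unit) (I := ⊥)
    (J := fun _ ↦ ⊥) (g := fun _ ↦ f) fun x hx ↦
      (mul_right_mem_nonZeroDivisors_eq_zero_iff hf).1 (hx ())
  simp only [fiberIdeal_bot, Ideal.mem_bot, forall_const] at h
  exact h.mono fun p hp ↦ mem_nonZeroDivisors_iff_right.2 hp

end FiberIdeal

section IntegrallyClosedIn

variable {R S B : Type*} [CommRing R] [CommRing S] [CommRing B] [Algebra R S] [Algebra R B]

lemma isIntegrallyClosedIn_tensorProduct [IsIntegrallyClosedIn R B]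
    (h : Function.Bijective (TensorProduct.toIntegralClosure R S B)) :
    IsIntegrallyClosedIn S (S ⊗[R] B) := by
  let e : S ≃ₐ[S] integralClosure S (S ⊗[R] B) :=
    (Algebra.TensorProduct.rid R S S).symm.trans <|
      (Algebra.TensorProduct.congr .refl
        (IsIntegralClosure.equiv R R B (integralClosure R B))).trans (.ofBijective _ h)
  have he (s : S) : (e s : S ⊗[R] B) = algebraMap S _ s := congrArg Subtype.val (e.commutes s)
  refine isIntegrallyClosedIn_iff.2 ⟨fun s t hst ↦ e.injective <| Subtype.ext ?_,
    fun {x} hx ↦ ⟨e.symm ⟨x, hx⟩, ?_⟩⟩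
  · rw [he, he, hst]
  · rw [← he, e.apply_symm_apply]

end IntegrallyClosedIn

section IsNormalRing

/-- A ring is normal if its localizations at prime ideals are integrally closed domains; the ring
itself need not be a domain. -/
def IsNormalRing (D : Type*) [CommRing D] : Prop :=
  ∀ (q : Ideal D) [q.IsPrime],
    IsDomain (Localization.AtPrime q) ∧ IsIntegrallyClosed (Localization.AtPrime q)

variable {D E : Type*} [CommRing D] [CommRing E]

namespace IsNormalRing

lemma of_subsingleton [Subsingleton D] : IsNormalRing D :=
  fun q hq ↦ absurd (Subsingleton.elim q ⊤) hq.ne_top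

lemma of_isLocalization (h : IsNormalRing D) (M : Submonoid D) [Algebra D E]
    [IsLocalization M E] : IsNormalRing E := by
  intro q _
  have := IsLocalization.isLocalization_isLocalization_atPrime_isLocalization M
    (Localization.AtPrime q) q
  let e := (IsLocalization.algEquiv (q.comap (algebraMap D E)).primeCompl
    (Localization.AtPrime q) (Localization.AtPrime (q.comap (algebraMap D E)))).toRingEquiv
  obtain ⟨_, _⟩ := h (q.comap (algebraMap D E))
  exact ⟨e.toMulEquiv.isDomain, .of_equiv e.symm⟩

lemma of_equiv (h : IsNormalRing D) (e : D ≃+* E) : IsNormalRing E := by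
  let := e.toRingHom.toAlgebra
  have : IsLocalization (IsUnit.submonoid D) E :=
    .isLocalization_of_algEquiv _ (AlgEquiv.ofRingEquiv (R := D) (f := e) fun _ ↦ rfl)
  exact h.of_isLocalization (IsUnit.submonoid D)

lemma of_forall_exists_away
    (h : ∀ (q : Ideal D) [q.IsPrime], ∃ g ∉ q, IsNormalRing (Localization.Away g)) :
    IsNormalRing D := by
  intro q hq
  obtain ⟨g, hg, hn⟩ := h q
  let M := Submonoid.powers g
  have hd : Disjoint (M : Set D) q := (Ideal.disjoint_powers_iff_notMem_of_isPrime _).2 hg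
  let Q := q.map (algebraMap D (Localization.Away g))
  have : Q.IsPrime := IsLocalization.isPrime_of_isPrime_disjoint M _ q hq hd
  have := IsLocalization.isLocalization_isLocalization_atPrime_isLocalization M
    (Localization.AtPrime Q) Q
  simp_rw [Q, IsLocalization.under_map_of_isPrime_disjoint M _ hq hd] at this
  let e := (IsLocalization.algEquiv q.primeCompl
    (Localization.AtPrime Q) (Localization.AtPrime q)).toRingEquiv
  obtain ⟨_, _⟩ := hn Q
  exact ⟨e.symm.toMulEquiv.isDomain, .of_equiv e⟩

lemma of_isArtinianRing [IsArtinianRing D] [IsReduced D] : IsNormalRing D := fun q _ ↦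
  have hq : IsField (Localization.AtPrime q) :=
    IsArtinianRing.isField_of_isReduced_of_isLocalRing _
  ⟨hq.isDomain, hq.toField.instIsIntegrallyClosed⟩

lemma isReduced (h : IsNormalRing D) : IsReduced D :=
  isReduced_ofLocalizationMaximal D fun p _ ↦
    have := (h p).1
    inferInstance

end IsNormalRing

lemma isDomain_of_isDomain_localization [IsNoetherianRing D] [Nontrivial D]
    (hD : ∀ (m : Ideal D) [m.IsMaximal], IsDomain (Localization.AtPrime m))
    (hidem : ∀ e : D, IsIdempotentElem e → e = 0 ∨ e = 1) : IsDomain D := by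
  suffices NoZeroDivisors D from NoZeroDivisors.to_isDomain D
  refine ⟨fun {x y} hxy ↦ ?_⟩
  let N : Ideal D := (Ideal.span {x}).annihilator
  have mem_N {r : D} : r ∈ N ↔ r * x = 0 := Submodule.mem_annihilator_span_singleton x r
  have hsup : N ⊔ N.annihilator = ⊤ := by
    by_contra hne
    obtain ⟨m, hm, hle⟩ := Ideal.exists_le_maximal _ hne
    have := hD m
    obtain ⟨⟨n, hn⟩, hnm⟩ := Module.mem_support_iff'.1 <|
      Module.mem_support_iff_of_finite (p := ⟨m, hm.isPrime⟩).2 (le_sup_right.trans hle)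
    have hnx : algebraMap D (Localization.AtPrime m) n * algebraMap D _ x = 0 := by
      rw [← map_mul, mem_N.1 hn, map_zero]
    rcases mul_eq_zero.1 hnx with h | h <;>
      obtain ⟨⟨s, hs⟩, h⟩ := (IsLocalization.map_eq_zero_iff m.primeCompl _ _).1 h
    · exact hnm s hs (Subtype.ext h)
    · exact hs (hle (le_sup_left (a := N) (mem_N.2 h)))
  obtain ⟨e, he, e', he', hadd⟩ := Submodule.mem_sup.1 (hsup ▸ Submodule.mem_top : (1 : D) ∈ _)
  have hmul : e' * e = 0 := Submodule.mem_annihilator.1 he' e he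
  have hee : e * e = e := by
    linear_combination e * hadd - hmul
  rcases hidem e hee with rfl | rfl
  · rw [zero_add] at hadd
    have hy : e' * y = 0 :=
      Submodule.mem_annihilator.1 he' y (mem_N.2 (by rw [mul_comm, hxy]))
    exact .inr (by rwa [hadd, one_mul] at hy)
  · exact .inl (by rw [← one_mul x, mem_N.1 he])

namespace IsNormalRing

lemma of_isIntegrallyClosedIn [Algebra D E] [IsNoetherianRing E] (hE : IsNormalRing E)
    [IsIntegrallyClosedIn D E] : IsNormalRing D := by
  intro q _
  let R := Localization.AtPrime q
  let S := R ⊗[D] E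
  let : Algebra E S := Algebra.TensorProduct.rightAlgebra
  let M := Algebra.algebraMapSubmonoid E q.primeCompl
  have hS : IsNormalRing S := hE.of_isLocalization M
  have : IsNoetherianRing S := IsLocalization.isNoetherianRing M S inferInstance
  have hRS : IsIntegrallyClosedIn R S := isIntegrallyClosedIn_tensorProduct
    (TensorProduct.toIntegralClosure_bijective_of_isLocalization q.primeCompl)
  have hinj : Function.Injective (algebraMap R S) := (isIntegrallyClosedIn_iff.1 hRS).1
  have : FaithfulSMul R S := (faithfulSMul_iff_algebraMap_injective R S).2 hinj
  have : Nontrivial S := hinj.nontrivial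
  -- Idempotents are integral, so those of `S` lie in the local ring `R`.
  have : IsDomain S := isDomain_of_isDomain_localization (fun m _ ↦ (hS m).1) fun e he ↦ by
    have he_int : IsIntegral R e :=
      ⟨.X ^ 2 - .X, by monicity!, by simp [pow_two, he.eq]⟩
    obtain ⟨r, rfl⟩ := IsIntegrallyClosedIn.isIntegral_iff.1 he_int
    have hr : r * (1 - r) = 0 := hinj (by rw [map_mul, map_sub, map_one, map_zero, mul_sub, mul_one,
      he.eq, sub_self])
    rcases IsLocalRing.isUnit_or_isUnit_one_sub_self r with hu | hu
    · exact .inr (by rw [← sub_eq_zero.1 (hu.mul_right_eq_zero.1 hr), map_one])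
    · exact .inl (by rw [hu.mul_left_eq_zero.1 hr, map_zero])
  have : IsIntegrallyClosed S := .of_localization_maximal fun m _ _ ↦ (hS m).2
  exact ⟨hinj.isDomain (algebraMap R S), .of_isIntegrallyClosed_of_isIntegrallyClosedIn R S⟩

variable (E) in
lemma of_etale [IsDomain D] [IsIntegrallyClosed D] [Algebra D E] [Algebra.Etale D E] :
    IsNormalRing E := by
  let L := FractionRing D
  let e := (Algebra.TensorProduct.comm D L E).toRingEquiv
  have : Module.Finite L (L ⊗[D] E) := Algebra.FormallyUnramified.finite_of_free _ _
  have : IsReduced (L ⊗[D] E) := Algebra.FormallyUnramified.isReduced_of_field L _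
  have : IsArtinianRing (L ⊗[D] E) := .of_finite L _
  have : IsNoetherianRing (E ⊗[D] L) := isNoetherianRing_of_ringEquiv _ e
  have : IsIntegrallyClosedIn D L := (isIntegrallyClosed_iff_isIntegrallyClosedIn L).1 inferInstance
  have : IsIntegrallyClosedIn E (E ⊗[D] L) :=
    isIntegrallyClosedIn_tensorProduct TensorProduct.toIntegralClosure_bijective_of_smooth
  exact (of_isArtinianRing.of_equiv e).of_isIntegrallyClosedIn

lemma of_smooth (k : Type*) [Field k] [Algebra k D] [Algebra.Smooth k D] : IsNormalRing D := by
  refine of_forall_exists_away fun q _ ↦ ?_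
  obtain ⟨g, hg, n, _, _, _⟩ :=
    Algebra.IsSmoothAt.exists_isStandardEtale_mvPolynomial (R := k) (p := q)
  exact ⟨g, hg, of_etale (D := MvPolynomial (Fin n) k) (Localization.Away g)⟩

end IsNormalRing

end IsNormalRing

section GenericFiber

variable {A B : Type*} [CommRing A] [CommRing B] [Algebra A B]

lemma isNormalRing_fiber_away (p : PrimeSpectrum A) {f : B}
    [Algebra.Smooth A (Localization.Away f)] :
    IsNormalRing (Localization.Away (1 ⊗ₜ f : p.asIdeal.Fiber B)) :=
  have : Algebra.Smooth p.asIdeal.ResidueField (Localization.Away (1 ⊗ₜ f : p.asIdeal.Fiber B)) :=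
    .of_equiv <| IsLocalization.Away.tensorProductEquivTMulRight A p.asIdeal.ResidueField f
      (Localization.Away f)
  .of_smooth p.asIdeal.ResidueField

variable [IsDomain A]

lemma eventually_subsingleton_fiber (hB : ¬ Function.Injective (algebraMap A B)) :
    ∀ᶠ p in 𝓝 (⊥ : PrimeSpectrum A), Subsingleton (p.asIdeal.Fiber B) := by
  simp only [injective_iff_map_eq_zero, not_forall] at hB
  obtain ⟨a, ha, ha₀⟩ := hB
  filter_upwards [eventually_notMem_asIdeal ha₀] with p hp
  have hu : IsUnit (algebraMap A (p.asIdeal.Fiber B) a) := by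
    rw [IsScalarTower.algebraMap_apply A p.asIdeal.ResidueField]
    exact (IsUnit.mk0 _ (mt p.asIdeal.algebraMap_residueField_eq_zero.1 hp)).map _
  refine subsingleton_of_zero_eq_one (isUnit_zero_iff.1 ?_)
  rwa [← map_zero (Algebra.TensorProduct.includeRight : B →ₐ[A] p.asIdeal.Fiber B), ← ha,
    AlgHom.commutes]

variable [IsNoetherianRing A] [CharZero A] [Algebra.FiniteType A B]

variable (B) in
lemma eventually_isReduced_fiber [IsDomain B] :
    ∀ᶠ p in 𝓝 (⊥ : PrimeSpectrum A), _root_.IsReduced (p.asIdeal.Fiber B) := by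
  by_cases hB : Function.Injective (algebraMap A B)
  · have : FaithfulSMul A B := (faithfulSMul_iff_algebraMap_injective A B).2 hB
    obtain ⟨f, hf, _⟩ := exists_smooth_away (A := A) B
    filter_upwards [eventually_one_tmul_mem_nonZeroDivisors (mem_nonZeroDivisors_of_ne_zero hf)]
      with p hp
    have := (isNormalRing_fiber_away p (f := f)).isReduced
    exact isReduced_of_injective _ (IsLocalization.injective
      (Localization.Away (1 ⊗ₜ f : p.asIdeal.Fiber B)) (Submonoid.powers_le.2 hp))
  · exact (eventually_subsingleton_fiber hB).mono fun p _ ↦ inferInstance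

lemma eventually_isRadical_fiberIdeal {J : Ideal B} (hJ : J.IsRadical) :
    ∀ᶠ p in 𝓝 (⊥ : PrimeSpectrum A), (fiberIdeal p J).IsRadical := by
  have : IsNoetherianRing B := Algebra.FiniteType.isNoetherianRing A B
  have : Finite J.minimalPrimes := J.finite_minimalPrimes_of_isNoetherianRing
  have hred : ∀ᶠ p in 𝓝 (⊥ : PrimeSpectrum A),
      ∀ q : J.minimalPrimes, _root_.IsReduced (p.asIdeal.Fiber (B ⧸ q.1)) :=
    eventually_all.2 fun q ↦
      have : q.1.IsPrime := q.2.1.1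
      eventually_isReduced_fiber (B ⧸ q.1)
  have hinf (x : B) (hx : ∀ q : J.minimalPrimes, x * 1 ∈ q.1) : x ∈ J := by
    rw [← hJ.radical, ← Ideal.sInf_minimalPrimes, Ideal.mem_sInf]
    exact fun q hqJ ↦ mul_one x ▸ hx ⟨q, hqJ⟩
  filter_upwards [hred, eventually_mem_fiberIdeal_of_forall_mul_mem (A := A) hinf]
    with p hred hmem x ⟨n, hx⟩
  refine hmem x fun q ↦ ?_
  rw [← Algebra.TensorProduct.one_def, mul_one]
  have := hred q
  exact isRadical_fiberIdeal ⟨n, fiberIdeal_mono q.2.1.2 hx⟩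

lemma eventually_colon_fiberIdeal_le {I J K : Ideal B} (h : I.colon J ≤ K) :
    ∀ᶠ p in 𝓝 (⊥ : PrimeSpectrum A),
      (fiberIdeal p I).colon (fiberIdeal p J) ≤ fiberIdeal p K := by
  have : IsNoetherianRing B := Algebra.FiniteType.isNoetherianRing A B
  obtain ⟨s, rfl⟩ := IsNoetherian.noetherian J
  have hs (x : B) (hx : ∀ y : s, x * y ∈ I) : x ∈ K := by
    refine h ?_
    rw [Submodule.colon_span]
    exact Submodule.mem_colon.2 fun y hy ↦ hx ⟨y, hy⟩
  filter_upwards [eventually_mem_fiberIdeal_of_forall_mul_mem (A := A) hs] with p hp x hx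
  exact hp x fun y ↦ Submodule.mem_colon.1 hx _ <|
    one_tmul_mem_fiberIdeal (Submodule.subset_span y.2)

end GenericFiber

section GrauertRemmert

variable {D E : Type*} [CommRing D] [CommRing E] [Algebra D E]

lemma mem_of_isIntegral_of_isRadical (hinj : Function.Injective (algebraMap D E)) {J : Ideal D}
    (hJ : J.IsRadical) {b : E} (hb : IsIntegral D b) {y d : D} (hy : y ∈ J)
    (hd : algebraMap D E y * b = algebraMap D E d) : d ∈ J := by
  obtain ⟨P, hP, hPb⟩ := hb
  have hroot : (P.scaleRoots y).eval d = 0 := by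
    have h : Polynomial.aeval (algebraMap D E y * b) (P.scaleRoots y) = 0 :=
      Polynomial.scaleRoots_aeval_eq_zero hPb
    rwa [hd, Polynomial.aeval_algebraMap_apply, map_eq_zero_iff _ hinj,
      Polynomial.coe_aeval_eq_eval] at h
  rw [Polynomial.eval_eq_sum_range, Finset.sum_range_succ,
    ((Polynomial.monic_scaleRoots_iff y).2 hP).coeff_natDegree, one_mul] at hroot
  refine hJ ⟨_, (eq_neg_of_add_eq_zero_right hroot) ▸ neg_mem (sum_mem fun i hi ↦ ?_)⟩
  rw [Finset.mem_range, Polynomial.natDegree_scaleRoots] at hi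
  rw [Polynomial.coeff_scaleRoots]
  exact Ideal.mul_mem_right _ _ <| Ideal.mul_mem_left _ _ <|
    Ideal.pow_mem_of_mem _ hy _ (Nat.sub_pos_of_lt hi)

lemma mem_range_of_isIntegral_of_colon_le (hinj : Function.Injective (algebraMap D E)) {f : D}
    (hf : IsUnit (algebraMap D E f)) {J : Ideal D} (hJ : J.IsRadical) (hfJ : f ∈ J)
    (hcolon : (Ideal.span {f} * J).colon J ≤ Ideal.span {f}) {b : E} (hb : IsIntegral D b)
    (hbJ : ∀ y ∈ J, algebraMap D E y * b ∈ (algebraMap D E).range) :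
    b ∈ (algebraMap D E).range := by
  obtain ⟨x, hx⟩ := hbJ f hfJ
  have hxf : x ∈ Ideal.span {f} := by
    refine hcolon (Submodule.mem_colon.2 fun y hy ↦ ?_)
    obtain ⟨d, hd⟩ := hbJ y hy
    have hxy : x * y = f * d := hinj (by rw [map_mul, map_mul, hx, hd]; ring)
    rw [smul_eq_mul, hxy]
    exact Ideal.mul_mem_mul (Ideal.mem_span_singleton_self f)
      (mem_of_isIntegral_of_isRadical hinj hJ hb hy hd.symm)
  obtain ⟨c, rfl⟩ := Ideal.mem_span_singleton.1 hxf
  exact ⟨c, hf.mul_left_cancel (by rw [← hx, map_mul])⟩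

/-- The Grauert–Remmert criterion. -/
lemma isIntegrallyClosedIn_away_of_colon_le {f : D} [IsLocalization.Away f E]
    (hf : f ∈ nonZeroDivisors D) {J : Ideal D} (hJ : J.IsRadical) (hfJ : f ∈ J) {m : ℕ}
    (hm : J ^ m ≤ Ideal.span {f}) (hcolon : (Ideal.span {f} * J).colon J ≤ Ideal.span {f}) :
    IsIntegrallyClosedIn D E := by
  have hinj : Function.Injective (algebraMap D E) :=
    IsLocalization.injective E (Submonoid.powers_le.2 hf)
  have hfu : IsUnit (algebraMap D E f) := IsLocalization.Away.algebraMap_isUnit f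
  have hdescent (N : ℕ) {b : E} (hb : IsIntegral D b)
      (hbJ : ∀ y ∈ J ^ N, algebraMap D E y * b ∈ (algebraMap D E).range) :
      b ∈ (algebraMap D E).range := by
    induction N generalizing b with
    | zero =>
      simpa only [map_one, one_mul] using hbJ 1 (by rw [pow_zero, Ideal.one_eq_top]; trivial)
    | succ N ih =>
      refine ih hb fun y hy ↦ mem_range_of_isIntegral_of_colon_le hinj hfu hJ hfJ hcolon
        (isIntegral_algebraMap.mul hb) fun x hx ↦ ?_
      rw [← mul_assoc, ← map_mul]
      exact hbJ (x * y) (pow_succ' J N ▸ Ideal.mul_mem_mul hx hy)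
  refine isIntegrallyClosedIn_iff.2 ⟨hinj, fun {b} hb ↦ ?_⟩
  obtain ⟨n, d, hd⟩ := IsLocalization.Away.surj f b
  refine hdescent (m * n) hb fun y hy ↦ ?_
  have hyf : y ∈ Ideal.span {f ^ n} := by
    rw [← Ideal.span_singleton_pow]
    exact Ideal.pow_right_mono hm n (pow_mul J m n ▸ hy)
  obtain ⟨c, rfl⟩ := Ideal.mem_span_singleton'.1 hyf
  exact ⟨c * d, by rw [map_mul, map_mul, ← hd, map_pow]; ring⟩

lemma colon_le_span_singleton_of_isIntegrallyClosed [IsDomain D] [IsIntegrallyClosed D]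
    {f : D} (hf : f ≠ 0) {J : Ideal D} (hfJ : f ∈ J) (hJ : J.FG) :
    (Ideal.span {f} * J).colon J ≤ Ideal.span {f} := by
  intro x hx
  let K := FractionRing D
  let N : Submodule D K := Submodule.map (Algebra.linearMap D K) J
  have hfK : algebraMap D K f ≠ 0 :=
    (map_ne_zero_iff _ (IsFractionRing.injective D K)).2 hf
  have hN : N ≠ ⊥ := (Submodule.ne_bot_iff N).2 ⟨_, ⟨f, hfJ, rfl⟩, hfK⟩
  have hint : IsIntegral D (algebraMap D K x / algebraMap D K f) := by
    refine isIntegral_of_smul_mem_submodule N hN (Submodule.FG.map _ hJ) _ ?_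
    rintro _ ⟨y, hy, rfl⟩
    obtain ⟨z, hz, hxy⟩ := Ideal.mem_span_singleton_mul.1 (Submodule.mem_colon.1 hx y hy)
    refine ⟨z, hz, ?_⟩
    rw [Algebra.linearMap_apply, Algebra.linearMap_apply, smul_eq_mul, div_mul_eq_mul_div,
      ← map_mul, ← smul_eq_mul, ← hxy, map_mul, mul_div_cancel_left₀ _ hfK]
  obtain ⟨c, hc⟩ := (isIntegrallyClosed_iff K).1 inferInstance hint
  refine Ideal.mem_span_singleton'.2 ⟨c, IsFractionRing.injective D K ?_⟩
  rw [map_mul, hc, div_mul_cancel₀ _ hfK]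

end GrauertRemmert

section NormalFiber

variable {A : Type*} (B : Type*) [CommRing A] [IsDomain A] [IsNoetherianRing A] [CharZero A]
  [CommRing B] [IsDomain B] [IsIntegrallyClosed B] [Algebra A B] [Algebra.FiniteType A B]

theorem eventually_isNormalRing_fiber :
    ∀ᶠ p in 𝓝 (⊥ : PrimeSpectrum A), IsNormalRing (p.asIdeal.Fiber B) := by
  by_cases hB : Function.Injective (algebraMap A B)
  swap
  · exact (eventually_subsingleton_fiber hB).mono fun p _ ↦ .of_subsingleton
  have : FaithfulSMul A B := (faithfulSMul_iff_algebraMap_injective A B).2 hB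
  have : IsNoetherianRing B := Algebra.FiniteType.isNoetherianRing A B
  obtain ⟨f, hf, _⟩ := exists_smooth_away (A := A) B
  let J := (Ideal.span {f}).radical
  have hfJ : f ∈ J := Ideal.le_radical (Ideal.mem_span_singleton_self f)
  have hJ : J.FG := IsNoetherian.noetherian J
  obtain ⟨m, hm⟩ := Ideal.exists_radical_pow_le_of_fg _ hJ
  filter_upwards [eventually_one_tmul_mem_nonZeroDivisors (mem_nonZeroDivisors_of_ne_zero hf),
    eventually_isRadical_fiberIdeal (Ideal.radical_isRadical (Ideal.span {f})),
    eventually_colon_fiberIdeal_le (colon_le_span_singleton_of_isIntegrallyClosed hf hfJ hJ)]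
    with p hreg hrad hcolon
  rw [fiberIdeal_mul, fiberIdeal_span_singleton] at hcolon
  have hpow := fiberIdeal_mono (p := p) hm
  rw [fiberIdeal_pow, fiberIdeal_span_singleton] at hpow
  let E := Localization.Away (1 ⊗ₜ f : p.asIdeal.Fiber B)
  have : IsNoetherianRing (p.asIdeal.Fiber B) :=
    Algebra.FiniteType.isNoetherianRing p.asIdeal.ResidueField _
  have : IsNoetherianRing E :=
    IsLocalization.isNoetherianRing (.powers (1 ⊗ₜ f : p.asIdeal.Fiber B)) E inferInstance
  have : IsIntegrallyClosedIn (p.asIdeal.Fiber B) E :=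
    isIntegrallyClosedIn_away_of_colon_le hreg hrad (one_tmul_mem_fiberIdeal hfJ) hpow hcolon
  exact (isNormalRing_fiber_away p (f := f)).of_isIntegrallyClosedIn

end NormalFiber

section IsNormalScheme

namespace IsNormalScheme

lemma of_isNormalRing {R : CommRingCat.{u}} (hR : IsNormalRing R) : IsNormalScheme (Spec R) := by
  intro x
  let p : PrimeSpectrum R := x
  obtain ⟨_, _⟩ := hR p.asIdeal
  let e := (IsLocalization.algEquiv p.asIdeal.primeCompl (Localization.AtPrime p.asIdeal)
    ((Spec.structureSheaf R).presheaf.stalk p)).toRingEquiv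
  exact ⟨e.symm.toMulEquiv.isDomain, .of_equiv e⟩

lemma of_forall_exists_isOpenImmersion {Y : Scheme.{u}}
    (h : ∀ y : Y, ∃ (X : Scheme.{u}) (f : X ⟶ Y), IsOpenImmersion f ∧ IsNormalScheme X ∧
      y ∈ Set.range f) : IsNormalScheme Y := by
  intro y
  obtain ⟨X, f, _, hX, x, rfl⟩ := h y
  obtain ⟨_, _⟩ := hX x
  let e := (asIso (f.stalkMap x)).commRingCatIsoToRingEquiv
  exact ⟨e.toMulEquiv.isDomain, .of_equiv e.symm⟩

lemma of_iso {X Y : Scheme.{u}} (e : X ≅ Y) (hX : IsNormalScheme X) : IsNormalScheme Y :=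
  of_forall_exists_isOpenImmersion fun y ↦
    ⟨X, e.hom, inferInstance, hX, e.inv y, by rw [← Scheme.Hom.comp_apply]; simp⟩

lemma isIntegrallyClosed_section {X : Scheme.{u}} (hX : IsNormalScheme X) {U : X.Opens}
    (hU : IsAffineOpen U) [IsDomain Γ(X, U)] : IsIntegrallyClosed Γ(X, U) := by
  refine .of_localization_maximal fun m _ hm ↦ ?_
  let x : PrimeSpectrum Γ(X, U) := ⟨m, hm.isPrime⟩
  have hx : hU.fromSpec x ∈ U := hU.range_fromSpec.subset ⟨x, rfl⟩
  have := (hX (hU.fromSpec x)).2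
  let := TopCat.Presheaf.algebra_section_stalk X.presheaf ⟨hU.fromSpec x, hx⟩
  have : IsLocalization.AtPrime (X.presheaf.stalk (hU.fromSpec x)) x.asIdeal :=
    hU.isLocalization_stalk' x hx
  exact .of_equiv (IsLocalization.algEquiv x.asIdeal.primeCompl
    (X.presheaf.stalk (hU.fromSpec x)) (Localization.AtPrime x.asIdeal)).toRingEquiv

end IsNormalScheme

lemma isNormalScheme_fiber_spec {R S : CommRingCat.{u}} (φ : R ⟶ S) (p : PrimeSpectrum R)
    (h : letI := φ.hom.toAlgebra; IsNormalRing (p.asIdeal.Fiber S)) :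
    IsNormalScheme ((Spec.map φ).fiber p) := by
  let := φ.hom.toAlgebra
  exact .of_iso (Arrow.leftFunc.mapIso (Spec.fiberToSpecResidueFieldIso R S p)).symm
    (.of_isNormalRing (R := .of (p.asIdeal.Fiber S)) h)

variable {W T : Scheme.{u}} (h : W ⟶ T) {V : T.Opens}

lemma exists_isOpenImmersion_fiber_appLE (hV : IsAffineOpen V) {V' : W.Opens}
    (hV' : IsAffineOpen V') (e : V' ≤ h ⁻¹ᵁ V) (p : Spec Γ(T, V)) :
    ∃ f : (Spec.map (h.appLE V V' e)).fiber p ⟶ h.fiber (hV.fromSpec p),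
      IsOpenImmersion f ∧ Set.range f = h.fiberι (hV.fromSpec p) ⁻¹' V' := by
  have hκ : (Spec Γ(T, V)).fromSpecResidueField p ≫ hV.fromSpec =
      Spec.map (hV.fromSpec.residueFieldMap p) ≫ T.fromSpecResidueField (hV.fromSpec p) := by
    simp
  unfold Scheme.Hom.fiberι Scheme.Hom.fiber
  refine ⟨pullback.map _ _ _ _ hV'.fromSpec (Spec.map (hV.fromSpec.residueFieldMap p)) hV.fromSpec
    (IsAffineOpen.SpecMap_appLE_fromSpec h hV hV' e) hκ, ?_, ?_⟩
  · infer_instance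
  · rw [Scheme.Pullback.range_map, hV'.range_fromSpec,
      Set.range_eq_univ.2 (Spec.map _).surjective, Set.preimage_univ, Set.inter_univ]

variable [IsIntegral W] [IsIntegral T] [IsLocallyNoetherian T] [CharZero T.functionField]
  [LocallyOfFiniteType h]

lemma eventually_isNormalScheme_fiber_appLE (hW : IsNormalScheme W) [Nonempty V]
    (hV : IsAffineOpen V) {V' : W.Opens} (hV' : IsAffineOpen V') (e : V' ≤ h ⁻¹ᵁ V) :
    ∀ᶠ p in 𝓝 (genericPoint (Spec Γ(T, V))),
      IsNormalScheme ((Spec.map (h.appLE V V' e)).fiber p) := by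
  let := (h.appLE V V' e).hom.toAlgebra
  have : IsNoetherianRing Γ(T, V) := IsLocallyNoetherian.component_noetherian ⟨V, hV⟩
  have : CharZero Γ(T, V) := (T.germToFunctionField V).hom.charZero
  have : Algebra.FiniteType Γ(T, V) Γ(W, V') := h.finiteType_appLE hV hV' e
  suffices H : ∀ᶠ p in 𝓝 (⊥ : PrimeSpectrum Γ(T, V)), IsNormalRing (p.asIdeal.Fiber Γ(W, V')) by
    rw [genericPoint_eq_bot_of_affine]
    exact H.mono fun p hp ↦ isNormalScheme_fiber_spec _ p hp
  rcases (V' : Set W).eq_empty_or_nonempty with hV'_empty | hV'_nonempty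
  · obtain rfl : V' = ⊥ := TopologicalSpace.Opens.coe_eq_empty.1 hV'_empty
    exact .of_forall fun p ↦ .of_subsingleton
  · have : Nonempty V' := hV'_nonempty.to_subtype
    have := hW.isIntegrallyClosed_section hV'
    exact eventually_isNormalRing_fiber _

theorem eventually_isNormalScheme_fiber [QuasiCompact h] (hW : IsNormalScheme W) :
    ∀ᶠ t in 𝓝 (genericPoint T), IsNormalScheme (h.fiber t) := by
  obtain ⟨V, hV, htV, -⟩ := exists_isAffineOpen_mem_and_subset (x := genericPoint T)
    (U := ⊤) trivial
  have : Nonempty V := ⟨⟨_, htV⟩⟩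
  obtain ⟨s, hs, hsV⟩ := isCompact_iff_finite_and_eq_biUnion_affineOpens.1 <|
    h.isCompact_preimage hV.isCompact
  have := hs.to_subtype
  have hle (i : s) : (i.1 : W.Opens) ≤ h ⁻¹ᵁ V := hsV ▸ le_iSup₂_of_le i.1 i.2 le_rfl
  rw [← genericPoint_eq_of_isOpenImmersion hV.fromSpec,
    ← hV.fromSpec.isOpenEmbedding.map_nhds_eq, eventually_map]
  filter_upwards [eventually_all.2 fun i : s ↦
    eventually_isNormalScheme_fiber_appLE h hW hV i.1.2 (hle i)] with p hp
  refine .of_forall_exists_isOpenImmersion fun y ↦ ?_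
  have hy_fiber : h (h.fiberι _ y) = hV.fromSpec p := (h.range_fiberι _).subset ⟨y, rfl⟩
  have hy : h (h.fiberι _ y) ∈ V := hV.range_fromSpec.subset ⟨p, hy_fiber.symm⟩
  rw [← Scheme.Hom.mem_preimage, hsV] at hy
  simp only [TopologicalSpace.Opens.mem_iSup] at hy
  obtain ⟨i, hi, hyi⟩ := hy
  obtain ⟨f, hf, hrange⟩ := exists_isOpenImmersion_fiber_appLE h hV i.2 (hle ⟨i, hi⟩) p
  exact ⟨_, f, hf, hp ⟨i, hi⟩, hrange ▸ hyi⟩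

end IsNormalScheme

theorem generic_fibre_of_normal_is_normal_general {W T : Scheme.{u}} (h : W ⟶ T)
    [IsIntegral W] [IsIntegral T] [IsLocallyNoetherian T] [CharZero T.functionField]
    [LocallyOfFiniteType h] [QuasiCompact h] (hW : IsNormalScheme W) :
    ∃ U : Set T, IsOpen U ∧ Dense U ∧
      ∀ t : T, t ∈ U → IsNormalScheme (pullback h (T.fromSpecResidueField t)) := by
  obtain ⟨U, hU, hUo, hηU⟩ := eventually_nhds_iff.1 (eventually_isNormalScheme_fiber h hW)
  exact ⟨U, hUo, hUo.dense ⟨_, hηU⟩, hU⟩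

/-- **(General fibres of a morphism from a normal variety are normal.)**  Let
`h : W → T` be a morphism of irreducible varieties over `ℂ` (integral, separated schemes
of finite type over `ℂ`) with `W` normal.  Then a general fibre of `h` is normal: there
is a dense open subset `U ⊆ T` such that for every `t ∈ U` the (scheme-theoretic) fibre
`h⁻¹(t) = W ×_T Spec κ(t)` is a normal scheme. -/
theorem generic_fibre_of_normal_is_normal
    (W T : Scheme) (h : W ⟶ T)
    (fW : W ⟶ Spec (CommRingCat.of ℂ)) (fT : T ⟶ Spec (CommRingCat.of ℂ))
    (hcomm : h ≫ fT = fW)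
    [IsIntegral W] [IsIntegral T]
    [LocallyOfFiniteType fW] [QuasiCompact fW] [IsSeparated fW]
    [LocallyOfFiniteType fT] [QuasiCompact fT] [IsSeparated fT]
    (hWnormal : IsNormalScheme W) :
    ∃ U : Set T, IsOpen U ∧ Dense U ∧
      ∀ t : T, t ∈ U → IsNormalScheme (pullback h (T.fromSpecResidueField t)) := by
  subst hcomm
  have : LocallyOfFiniteType h := locallyOfFiniteType_of_comp h fT
  have : QuasiCompact h := .of_comp h fT
  have : IsLocallyNoetherian T := LocallyOfFiniteType.isLocallyNoetherian fT
  have : CharZero T.functionField := charZero_of_injective_ringHom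
    (Spec.preimage (T.fromSpecStalk (genericPoint T) ≫ fT)).hom.injective
  exact generic_fibre_of_normal_is_normal_general h hWnormal

end
end

section
/- Let Y ⊆ ℙ^r (over ℂ) be an irreducible, non-projectable m-dimensional subvariety with 2m ≥ r. Then f(π^{-1}(E_Y)) = ℙ^r, i.e. the union of the embedded tangent lines of Y (the limits of secant lines at coincident pairs of points) is all of ℙ^r. (This is a consequence of the Fulton–Hansen connectedness theorem.) -/
/- Background for [Lopez-Ran, "On the irreducibility of secant cones, and an application
to linear normality"]: a concrete model of complex projective geometry.  Projective space
`ℙ^r(ℂ)` is the projectivization of `ℂ^{r+1}`, equipped with the Zariski topology;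
subvarieties are (closed, irreducible) subsets; tangent spaces, smoothness, the invariant
`σ(Y)`, secant varieties/cones, generic linear projections and their double loci, and
linear normality are all defined from first principles below. -/

open MvPolynomial Set

noncomputable section

/-- Complex projective space of lines in `ℂⁿ` (so of projective dimension `n - 1`). -/
abbrev PrV (n : ℕ) : Type := Projectivization ℂ (Fin n → ℂ)

/-- `ℙ^r` over `ℂ`. -/
abbrev Pr (r : ℕ) : Type := PrV (r + 1)

/-- The vanishing locus in projective space of a polynomial, defined via all nonzero lifts
(for a homogeneous polynomial this is the usual projective zero locus). -/
def pZero {n : ℕ} (f : MvPolynomial (Fin n) ℂ) : Set (PrV n) :=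
  {x | ∀ v : Fin n → ℂ, ∀ hv : v ≠ 0, Projectivization.mk ℂ v hv = x → eval v f = 0}

/-- The Zariski topology on complex projective space. -/
instance prTop (n : ℕ) : TopologicalSpace (PrV n) :=
  TopologicalSpace.generateFrom {U | ∃ f : MvPolynomial (Fin n) ℂ, U = (pZero f)ᶜ}

/-- The Zariski topology on the affine space `ℂ^σ`. -/
def affTop (σ : Type) : TopologicalSpace (σ → ℂ) :=
  TopologicalSpace.generateFrom {U | ∃ f : MvPolynomial σ ℂ, U = {v | eval v f ≠ 0}}

/-- A property holds generically (on a dense Zariski-open set) on the affine space `ℂ^σ`. -/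
def GenericAff {σ : Type} (P : (σ → ℂ) → Prop) : Prop :=
  ∃ U : Set (σ → ℂ), @IsOpen _ (affTop σ) U ∧ @Dense _ (affTop σ) U ∧ ∀ v ∈ U, P v

/-- The projective line through two points (their linear span); for `x = y` this is `{x}`. -/
def lineThrough {n : ℕ} (x y : PrV n) : Set (PrV n) :=
  {z | z.rep ∈ Submodule.span ℂ ({x.rep, y.rep} : Set (Fin n → ℂ))}

/-- The projective linear subspace associated to a linear subspace `W ⊆ ℂⁿ`. -/
def projSub {n : ℕ} (W : Submodule ℂ (Fin n → ℂ)) : Set (PrV n) := {x | x.rep ∈ W}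

/-- The secant variety of `Y`: the (closure of the) union of all lines spanned by pairs of
distinct points of `Y`, i.e. the union of all secant lines of `Y`. -/
def secantVariety {n : ℕ} (Y : Set (PrV n)) : Set (PrV n) :=
  closure (⋃ x ∈ Y, ⋃ y ∈ Y, ⋃ _ : x ≠ y, lineThrough x y)

/-- `Y` is projectable if its secant variety is not all of projective space. -/
def Projectable {n : ℕ} (Y : Set (PrV n)) : Prop := secantVariety Y ≠ Set.univ

/-- Hyperplanes in projective space. -/
def IsHyperplane {n : ℕ} (H : Set (PrV n)) : Prop :=
  ∃ φ : (Fin n → ℂ) →ₗ[ℂ] ℂ, φ ≠ 0 ∧ H = {x | φ x.rep = 0}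

/-- A set in projective space is nondegenerate if it is contained in no hyperplane. -/
def NondegenerateSet {n : ℕ} (Y : Set (PrV n)) : Prop :=
  ∀ H : Set (PrV n), IsHyperplane H → ¬ Y ⊆ H

/-- Dimension of a subset of projective space: the Krull dimension of the subspace
topology. -/
def pdim {n : ℕ} (S : Set (PrV n)) : WithBot ℕ∞ := topologicalKrullDim S

/-- The homogeneous ideal of `Y` (as a set): all polynomials all of whose lifts vanish on
the affine cone of `Y`. -/
def homIdeal {n : ℕ} (Y : Set (PrV n)) : Set (MvPolynomial (Fin n) ℂ) := {f | Y ⊆ pZero f}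

/-- The differential of a polynomial at a point of `ℂⁿ`, as a linear form. -/
def jacLin {n : ℕ} (f : MvPolynomial (Fin n) ℂ) (v : Fin n → ℂ) : (Fin n → ℂ) →ₗ[ℂ] ℂ :=
  ∑ i, eval v (pderiv i f) • LinearMap.proj i

/-- The affine tangent space of the cone over `Y` at `v`: the common kernel of the
differentials of all elements of the homogeneous ideal of `Y`. -/
def affTangent {n : ℕ} (Y : Set (PrV n)) (v : Fin n → ℂ) : Submodule ℂ (Fin n → ℂ) :=
  ⨅ f ∈ homIdeal Y, LinearMap.ker (jacLin f v)

/-- The embedded projective tangent space `T_x Y ⊆ ℙⁿ⁻¹`. -/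
def projTangent {n : ℕ} (Y : Set (PrV n)) (x : PrV n) : Set (PrV n) :=
  projSub (affTangent Y x.rep)

/-- `x` is a smooth point of `Y` if the affine tangent space of the cone has the expected
dimension `dim Y + 1`. -/
def IsSmoothPt {n : ℕ} (Y : Set (PrV n)) (x : PrV n) : Prop :=
  ((Module.finrank ℂ (affTangent Y x.rep) : ℕ∞) : WithBot ℕ∞) = pdim Y + 1

/-- The smooth locus `Y_smooth` of `Y`. -/
def smoothLocus {n : ℕ} (Y : Set (PrV n)) : Set (PrV n) := {x ∈ Y | IsSmoothPt Y x}

/-- The singular locus of `Y`. -/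
def singLocus {n : ℕ} (Y : Set (PrV n)) : Set (PrV n) := Y \ smoothLocus Y

/-- `Y` is smooth if every point of `Y` is a smooth point. -/
def IsSmoothSet {n : ℕ} (Y : Set (PrV n)) : Prop := ∀ x ∈ Y, IsSmoothPt Y x

/-- A divisor on `Y`: an irreducible closed subvariety of `Y` of codimension one. -/
def IsDivisorOn {n : ℕ} (W Y : Set (PrV n)) : Prop :=
  W ⊆ Y ∧ IsIrreducible W ∧ closure W ∩ Y = W ∧ pdim W + 1 = pdim Y

/-- `σ(Y)`: the maximal dimension of a subvariety `Z` of the smooth locus of `Y` which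
contains a generic point of some divisor on `Y` (i.e. is dense in some divisor), and such
that all embedded tangent spaces `T_y Y`, `y ∈ Z`, lie in a fixed hyperplane. -/
def sigmaY {n : ℕ} (Y : Set (PrV n)) : WithBot ℕ∞ :=
  sSup { d | ∃ Z : Set (PrV n), Z ⊆ smoothLocus Y ∧ IsIrreducible Z ∧
      (∃ W, IsDivisorOn W Y ∧ W ⊆ closure (Z ∩ W)) ∧
      (∃ H, IsHyperplane H ∧ ∀ y ∈ Z, projTangent Y y ⊆ H) ∧ pdim Z = d }

/-- The ideal of polynomials vanishing (in all lifts) on the affine cone over `Y`. -/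
def idealOf {n : ℕ} (Y : Set (PrV n)) : Ideal (MvPolynomial (Fin n) ℂ) where
  carrier := homIdeal Y
  add_mem' := by
    intro f g hf hg x hx v hv hvx
    have h1 := hf hx v hv hvx
    have h2 := hg hx v hv hvx
    simp [map_add, h1, h2]
  zero_mem' := by intro x hx v hv hvx; simp
  smul_mem' := by
    intro c f hf x hx v hv hvx
    have h1 := hf hx v hv hvx
    simp [smul_eq_mul, map_mul, h1]

instance kerEvalPrime {n : ℕ} (v : Fin n → ℂ) :
    (RingHom.ker ((aeval v : MvPolynomial (Fin n) ℂ →ₐ[ℂ] ℂ) :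
      MvPolynomial (Fin n) ℂ →+* ℂ)).IsPrime :=
  RingHom.ker_isPrime _

/-- The local ring of the affine space `ℂⁿ` at the point `v`. -/
abbrev polyAtPoint {n : ℕ} (v : Fin n → ℂ) : Type :=
  Localization.AtPrime (RingHom.ker ((aeval v : MvPolynomial (Fin n) ℂ →ₐ[ℂ] ℂ) :
    MvPolynomial (Fin n) ℂ →+* ℂ))

/-- The local ring of the affine cone over `Y` at a (nonzero) point `v` of the cone. -/
abbrev coneLocalRing {n : ℕ} (Y : Set (PrV n)) (v : Fin n → ℂ) : Type :=
  polyAtPoint v ⧸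
    (Ideal.map (algebraMap (MvPolynomial (Fin n) ℂ) (polyAtPoint v)) (idealOf Y))

/-- A normal (irreducible, closed) subvariety of projective space: all local rings of its
affine cone at points of the punctured cone are integrally closed domains. -/
def IsNormalVariety {n : ℕ} (Y : Set (PrV n)) : Prop :=
  IsClosed Y ∧ IsIrreducible Y ∧
    ∀ x ∈ Y, IsDomain (coneLocalRing Y x.rep) ∧ IsIntegrallyClosed (coneLocalRing Y x.rep)

/-- The scheme-theoretic double locus of the projection of `Y` away from the projective
linear subspace `ℙ(W)`: points `y ∈ Y` such that the fibre of the projection through `y`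
(the span of `ℙ(W)` and `y`) meets `Y` in a subscheme different from the single reduced
point `y`: either it contains a second point of `Y`, or it is tangent to `Y` at `y`. -/
def doubleLocus {r : ℕ} (Y : Set (Pr r)) (W : Submodule ℂ (Fin (r+1) → ℂ)) : Set (Pr r) :=
  {y | y ∈ Y ∧
    ((∃ y' ∈ Y, y' ≠ y ∧ y'.rep ∈ W ⊔ Submodule.span ℂ {y.rep}) ∨
      affTangent Y y.rep ⊓ (W ⊔ Submodule.span ℂ {y.rep}) ≠ Submodule.span ℂ {y.rep})}

/-- The linear subspace spanned by a `(k+1)`-tuple of vectors of `ℂ^{r+1}` (used to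
parametrize generic linear subspaces of projective dimension `k`). -/
def spanOfTuple {r k : ℕ} (v : Fin (k+1) × Fin (r+1) → ℂ) :
    Submodule ℂ (Fin (r+1) → ℂ) :=
  Submodule.span ℂ (Set.range fun i : Fin (k+1) => fun j => v (i, j))

/-- The secant cone of `Y` at `z`: the closure of the union of all secant lines of `Y`
passing through `z`. -/
def secantCone {r : ℕ} (Y : Set (Pr r)) (z : Pr r) : Set (Pr r) :=
  closure (⋃ x ∈ Y, ⋃ y ∈ Y, ⋃ _ : x ≠ y, ⋃ _ : z ∈ lineThrough x y, lineThrough x y)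

/-- `Y` has the irreducible secant cone (ISC) property: the secant cone of `Y` at a generic
point of `ℙ^r` (equivalently, the generic fibre of `f : I_Y → ℙ^r`) is irreducible. -/
def ISC {r : ℕ} (Y : Set (Pr r)) : Prop :=
  ∃ U : Set (Pr r), IsOpen U ∧ Dense U ∧ ∀ z ∈ U, IsIrreducible (secantCone Y z)

/-- The outer (Segre) product of two vectors. -/
def outerVec {a b : ℕ} (v : Fin a → ℂ) (w : Fin b → ℂ) : Fin (a * b) → ℂ :=
  fun k => v (finProdFinEquiv.symm k).1 * w (finProdFinEquiv.symm k).2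

lemma outerVec_ne_zero {a b : ℕ} {v : Fin a → ℂ} {w : Fin b → ℂ}
    (hv : v ≠ 0) (hw : w ≠ 0) : outerVec v w ≠ 0 := by
  obtain ⟨i, hi⟩ := Function.ne_iff.mp hv
  obtain ⟨j, hj⟩ := Function.ne_iff.mp hw
  intro h
  have h2 := congrFun h (finProdFinEquiv (i, j))
  simp only [outerVec, Equiv.symm_apply_apply, Pi.zero_apply] at h2
  rcases mul_eq_zero.mp h2 with h3 | h3
  · exact hi h3
  · exact hj h3

/-- The Segre embedding of a product of projective spaces. -/
def segre {a b : ℕ} (p : PrV a × PrV b) : PrV (a * b) :=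
  Projectivization.mk ℂ (outerVec p.1.rep p.2.rep)
    (outerVec_ne_zero p.1.rep_nonzero p.2.rep_nonzero)

/-- The Zariski topology on a product of two projective spaces (induced via the Segre
embedding). -/
def pairTop (r : ℕ) : TopologicalSpace (Pr r × Pr r) :=
  TopologicalSpace.induced segre (prTop ((r+1) * (r+1)))

/-- Zariski closure in the product of two projective spaces. -/
def closureP {r : ℕ} (S : Set (Pr r × Pr r)) : Set (Pr r × Pr r) :=
  segre ⁻¹' closure (segre '' S)

/-- Zariski irreducibility of a subset of the product of two projective spaces. -/
def IsIrreducibleP {r : ℕ} (S : Set (Pr r × Pr r)) : Prop :=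
  IsIrreducible (closure (segre '' S))

/-- Zariski connectedness of a subset of the product of two projective spaces. -/
def IsConnectedP {r : ℕ} (S : Set (Pr r × Pr r)) : Prop :=
  IsConnected (segre '' S)

/-- Dimension of a subset of the product of two projective spaces. -/
def pdimP {r : ℕ} (S : Set (Pr r × Pr r)) : WithBot ℕ∞ := pdim (segre '' S)

/-- The (ordered-pairs model of the) fibre of `f : I_Y → ℙ^r` over `z ∈ ℙ^r`: pairs of
distinct points of `Y` whose secant line passes through `z`, together with limits of such
(the secant cone of `Y` at `z`, upstairs). -/
def secPairs {r : ℕ} (Y : Set (Pr r)) (z : Pr r) : Set (Pr r × Pr r) :=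
  {p | p.1 ∈ Y ∧ p.2 ∈ Y ∧ p.1 ≠ p.2 ∧ z ∈ lineThrough p.1 p.2}

/-- The fibre of `f : I_Y → ℙ^r` over `z` (with its limit points). -/
def secFiber {r : ℕ} (Y : Set (Pr r)) (z : Pr r) : Set (Pr r × Pr r) :=
  closureP (secPairs Y z)

/-- The linear map `ℂ^b → ℂ^a` given by a matrix of coefficients. -/
def matLin {a b : ℕ} (w : Fin a × Fin b → ℂ) : (Fin b → ℂ) →ₗ[ℂ] (Fin a → ℂ) :=
  Matrix.mulVecLin (Matrix.of fun i j => w (i, j))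

/-- The image of a subset of `ℙ^{b-1}` under the linear projection `ℙ^{b-1} ⇢ ℙ^{a-1}`
given by a matrix. -/
def projImage {a b : ℕ} (w : Fin a × Fin b → ℂ) (Z : Set (PrV b)) : Set (PrV a) :=
  {z | ∃ x ∈ Z, ∃ c : ℂ, c ≠ 0 ∧ z.rep = c • matLin w x.rep}

/-- `X ⊆ ℙ^N` is the image of `X̃ ⊆ ℙ^{N+1}` under a bijective projection from a point
`Q ∉ X̃` (the centre `Q` being the projectivized kernel of the surjective linear map `L`). -/
def IsBijectiveProjectionOf {N : ℕ} (X : Set (Pr N)) (Xt : Set (Pr (N+1))) : Prop :=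
  ∃ L : (Fin (N+2) → ℂ) →ₗ[ℂ] (Fin (N+1) → ℂ), Function.Surjective L ∧
    (∀ x ∈ Xt, L x.rep ≠ 0) ∧
    X = {z | ∃ x ∈ Xt, ∃ c : ℂ, c ≠ 0 ∧ z.rep = c • L x.rep} ∧
    (∀ x ∈ Xt, ∀ y ∈ Xt, (∃ c : ℂ, L x.rep = c • L y.rep) → x = y)

/-- `X ⊆ ℙ^N` is linearly normal if it is not the image, under a bijective projection from
a point, of a nondegenerate subvariety of `ℙ^{N+1}`. -/
def LinearlyNormal {N : ℕ} (X : Set (Pr N)) : Prop :=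
  ¬ ∃ Xt : Set (Pr (N+1)), IsClosed Xt ∧ IsIrreducible Xt ∧ NondegenerateSet Xt ∧
      IsBijectiveProjectionOf X Xt

/-- Extension by zero `ℂ^a → ℂ^b` (for `a ≤ b`). -/
def padMap (a b : ℕ) : (Fin a → ℂ) →ₗ[ℂ] (Fin b → ℂ) where
  toFun v := fun j => if h : (j : ℕ) < a then v ⟨j, h⟩ else 0
  map_add' v w := by funext j; by_cases h : (j : ℕ) < a <;> simp [h]
  map_smul' c v := by funext j; by_cases h : (j : ℕ) < a <;> simp [h]

lemma padMap_ne_zero {a b : ℕ} (hab : a ≤ b) {v : Fin a → ℂ} (hv : v ≠ 0) :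
    padMap a b v ≠ 0 := by
  obtain ⟨i, hi⟩ := Function.ne_iff.mp hv
  intro h
  have h2 := congrFun h ⟨i, lt_of_lt_of_le i.isLt hab⟩
  simp only [padMap, LinearMap.coe_mk, AddHom.coe_mk, Pi.zero_apply] at h2
  rw [dif_pos i.isLt] at h2
  exact hi (by simpa using h2)

/-- A point of `ℙ^{a-1}` viewed in `ℙ^{b-1}` via the inclusion of the first `a`
coordinates. -/
def embPt {a b : ℕ} (hab : a ≤ b) (x : PrV a) : PrV b :=
  Projectivization.mk ℂ (padMap a b x.rep) (padMap_ne_zero hab x.rep_nonzero)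

/-- The join of two subsets of projective space: the union of all lines joining a point of
`A` to a point of `B`. -/
def joinSets {n : ℕ} (A B : Set (PrV n)) : Set (PrV n) :=
  ⋃ x ∈ A, ⋃ y ∈ B, lineThrough x y


/-!
Let `C` be the affine cone over `Y`, `B` the coordinate ring of `C × C`, and `a`, `b` its two
generic points. Since the differences of points of `C` are dense, the coordinates of `a - b` are
algebraically independent; since `dim (C × C) = 2 (m + 1) > r + 1`, some `b i` is transcendental
over `ℂ[a - b]`. Hence, for every vector `e`, there is a place of the fraction field of `B` that
is finite with value `e` on `a - b` but has a pole at `b i`. Dividing by the coordinate of `b` with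
the largest pole, that is, multiplying by its inverse `t`, turns `b` and `a` into the integral cone
points `u` and `u + t • (a - b)`, and Taylor expansion of an equation `f` of `C` gives
`t ∣ df_u(a - b)`. So the reduction of `u` is a nonzero point of `C` over the residue field, and
`e` is tangent to `C` there. By the Nullstellensatz such a point also exists over `ℂ`.
-/

section DirectionalDerivative

variable {σ k A B : Type*} [Fintype σ] [CommRing k] [CommRing A] [CommRing B]
  [Algebra k A] [Algebra k B]

/-- The differential of a polynomial at the `A`-valued point `u`, applied to the tangent vector
`v`; the coordinates may live in any algebra over the coefficient ring. -/
def dirDeriv (f : MvPolynomial σ k) (u v : σ → A) : A :=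
  ∑ i, v i * aeval u (pderiv i f)

theorem dirDeriv_C (c : k) (u v : σ → A) : dirDeriv (C c) u v = 0 := by
  simp [dirDeriv]

theorem dirDeriv_X (i : σ) (u v : σ → A) : dirDeriv (X i : MvPolynomial σ k) u v = v i := by
  classical
  simp [dirDeriv, pderiv_X, Pi.single_apply, apply_ite]

theorem dirDeriv_add (f g : MvPolynomial σ k) (u v : σ → A) :
    dirDeriv (f + g) u v = dirDeriv f u v + dirDeriv g u v := by
  simp [dirDeriv, mul_add, Finset.sum_add_distrib]

theorem dirDeriv_mul (f g : MvPolynomial σ k) (u v : σ → A) :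
    dirDeriv (f * g) u v = aeval u f * dirDeriv g u v + aeval u g * dirDeriv f u v := by
  simp only [dirDeriv, Derivation.leibniz, smul_eq_mul, map_add, map_mul, Finset.mul_sum,
    ← Finset.sum_add_distrib]
  exact Finset.sum_congr rfl fun i _ => by ring

theorem dirDeriv_sum {ι : Type*} (s : Finset ι) (f : ι → MvPolynomial σ k) (u v : σ → A) :
    dirDeriv (∑ j ∈ s, f j) u v = ∑ j ∈ s, dirDeriv (f j) u v := by
  simp only [dirDeriv, map_sum, Finset.mul_sum]
  exact Finset.sum_comm

theorem map_dirDeriv (φ : A →ₐ[k] B) (f : MvPolynomial σ k) (u v : σ → A) :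
    φ (dirDeriv f u v) = dirDeriv f (φ ∘ u) (φ ∘ v) := by
  simp [dirDeriv, comp_aeval_apply, Function.comp_def]

theorem aeval_dirDeriv_X (x : σ → A)
    (f : MvPolynomial σ k) (e : σ → k) :
    aeval x (dirDeriv f X (C ∘ e) : MvPolynomial σ k) = dirDeriv f x (algebraMap k A ∘ e) := by
  rw [map_dirDeriv]
  congr 1 <;> funext i <;> simp

theorem exists_aeval_add_smul_eq (f : MvPolynomial σ k) (u v : σ → A) (t : A) :
    ∃ h, aeval (u + t • v) f = aeval u f + t * dirDeriv f u v + t ^ 2 * h := by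
  induction f using MvPolynomial.induction_on with
  | C c => exact ⟨0, by simp [dirDeriv_C]⟩
  | add f g hf hg =>
    obtain ⟨h₁, e₁⟩ := hf
    obtain ⟨h₂, e₂⟩ := hg
    refine ⟨h₁ + h₂, ?_⟩
    rw [map_add, map_add, dirDeriv_add, e₁, e₂]
    ring
  | mul_X f i hf =>
    obtain ⟨h, e⟩ := hf
    refine ⟨h * u i + t * h * v i + dirDeriv f u v * v i, ?_⟩
    rw [map_mul, map_mul, dirDeriv_mul, dirDeriv_X, e]
    simp only [aeval_X, Pi.add_apply, Pi.smul_apply, smul_eq_mul]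
    ring

theorem dvd_dirDeriv_of_aeval_eq_zero [IsDomain A] {f : MvPolynomial σ k} {u v : σ → A} {t : A}
    (ht : t ≠ 0) (hu : aeval u f = 0) (huv : aeval (u + t • v) f = 0) : t ∣ dirDeriv f u v := by
  obtain ⟨h, e⟩ := exists_aeval_add_smul_eq f u v t
  refine ⟨-h, mul_left_cancel₀ ht ?_⟩
  linear_combination -e + huv - hu

end DirectionalDerivative

section Homogeneous

variable {σ k A : Type*} [CommRing k] [CommRing A] [Algebra k A]

theorem aeval_smul_of_isHomogeneous {f : MvPolynomial σ k} {d : ℕ} (hf : f.IsHomogeneous d)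
    (c : A) (x : σ → A) : aeval (c • x) f = c ^ d * aeval x f := by
  simp only [aeval_def, eval₂_eq, Finset.mul_sum, Pi.smul_apply, smul_eq_mul, mul_pow,
    Finset.prod_mul_distrib, Finset.prod_pow_eq_pow_sum]
  refine Finset.sum_congr rfl fun m hm => ?_
  rw [show ∑ i ∈ m.support, m i = d by
    simpa [Finsupp.weight_apply, Finsupp.sum] using hf (mem_support_iff.1 hm)]
  ring

theorem dirDeriv_smul_of_isHomogeneous [Fintype σ] {f : MvPolynomial σ k} {d : ℕ}
    (hf : f.IsHomogeneous d) (c : A) (u v : σ → A) :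
    dirDeriv f (c • u) v = c ^ (d - 1) * dirDeriv f u v := by
  simp only [dirDeriv, aeval_smul_of_isHomogeneous hf.pderiv, Finset.mul_sum]
  exact Finset.sum_congr rfl fun i _ => by ring

attribute [local instance] MvPolynomial.gradedAlgebra

variable {I : Ideal (MvPolynomial σ k)}

theorem isHomogeneous_of_homogeneousComponent_mem
    (h : ∀ f ∈ I, ∀ d, homogeneousComponent d f ∈ I) :
    I.IsHomogeneous (homogeneousSubmodule σ k) := by
  intro d f hf
  exact (decomposition.decompose'_apply f d).symm ▸ h f hf d

theorem aeval_smul_eq_zero (hI : I.IsHomogeneous (homogeneousSubmodule σ k)) {x : σ → A}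
    (hx : ∀ f ∈ I, aeval x f = 0) (c : A) : ∀ f ∈ I, aeval (c • x) f = 0 := by
  intro f hf
  rw [← sum_homogeneousComponent f, map_sum]
  refine Finset.sum_eq_zero fun d _ => ?_
  rw [aeval_smul_of_isHomogeneous (homogeneousComponent_isHomogeneous d f),
    hx _ (homogeneousComponent_mem_of_mem hI hf d), mul_zero]

theorem dirDeriv_smul_eq_zero [Fintype σ] (hI : I.IsHomogeneous (homogeneousSubmodule σ k))
    {u v : σ → A} (hu : ∀ f ∈ I, dirDeriv f u v = 0) (c : A) :
    ∀ f ∈ I, dirDeriv f (c • u) v = 0 := by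
  intro f hf
  rw [← sum_homogeneousComponent f, dirDeriv_sum]
  refine Finset.sum_eq_zero fun d _ => ?_
  rw [dirDeriv_smul_of_isHomogeneous (homogeneousComponent_isHomogeneous d f),
    hu _ (homogeneousComponent_mem_of_mem hI hf d), mul_zero]

end Homogeneous

section CoordinateRing

variable {k σ τ ι κ : Type*} [Field k]

/-- The coordinate ring of a subset of affine space: polynomials modulo those vanishing on it. -/
abbrev CoordRing (C : Set (σ → k)) : Type _ :=
  MvPolynomial σ k ⧸ vanishingIdeal k C

/-- Restriction of polynomials to a subset of affine space. -/
def toCoordRing (C : Set (σ → k)) : MvPolynomial σ k →ₐ[k] CoordRing C :=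
  Ideal.Quotient.mkₐ k (vanishingIdeal k C)

theorem toCoordRing_surjective (C : Set (σ → k)) : Function.Surjective (toCoordRing C) :=
  Ideal.Quotient.mk_surjective

theorem toCoordRing_eq_zero_iff {C : Set (σ → k)} {f : MvPolynomial σ k} :
    toCoordRing C f = 0 ↔ ∀ v ∈ C, aeval v f = 0 :=
  Ideal.Quotient.eq_zero_iff_mem.trans mem_vanishingIdeal_iff

theorem aeval_toCoordRing_X_eq_zero {C : Set (σ → k)} {S : Set (τ → k)} (s : σ → τ)
    (hs : ∀ v ∈ S, v ∘ s ∈ C) :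
    ∀ f ∈ vanishingIdeal k C, aeval (fun i => toCoordRing S (X (s i))) f = 0 := by
  intro f hf
  have : toCoordRing S (rename s f) = 0 :=
    toCoordRing_eq_zero_iff.2 fun v hv => by rw [aeval_rename]; exact hf _ (hs v hv)
  rw [← this, rename_eq_aeval, comp_aeval_apply]
  rfl

theorem algebraicIndependent_toCoordRing_iff {C : Set (σ → k)} {p : ι → MvPolynomial σ k} :
    AlgebraicIndependent k (toCoordRing C ∘ p) ↔
      ∀ F : MvPolynomial ι k, (∀ v ∈ C, aeval (aeval v ∘ p) F = 0) → F = 0 := by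
  rw [algebraicIndependent_iff]
  refine forall_congr' fun F => imp_congr_left ?_
  have hF : toCoordRing C (aeval p F) = aeval (toCoordRing C ∘ p) F := comp_aeval_apply p _ F
  rw [← hF, toCoordRing_eq_zero_iff]
  exact forall₂_congr fun v _ => by rw [comp_aeval_apply]; rfl

theorem nonempty_of_isPrime_vanishingIdeal {C : Set (σ → k)}
    (hC : (vanishingIdeal k C).IsPrime) : C.Nonempty := by
  rw [nonempty_iff_ne_empty]
  rintro rfl
  exact hC.ne_top vanishingIdeal_empty

theorem exists_aeval_ne_zero_and_ne_zero {C : Set (σ → k)} (hC : (vanishingIdeal k C).IsPrime)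
    {f g : MvPolynomial σ k} (hf : ∃ v ∈ C, aeval v f ≠ 0) (hg : ∃ v ∈ C, aeval v g ≠ 0) :
    ∃ v ∈ C, aeval v f ≠ 0 ∧ aeval v g ≠ 0 := by
  have notMem_iff (h : MvPolynomial σ k) : h ∉ vanishingIdeal k C ↔ ∃ v ∈ C, aeval v h ≠ 0 := by
    simp [mem_vanishingIdeal_iff]
  rw [← notMem_iff] at hf hg
  simpa [mul_ne_zero_iff] using (notMem_iff (f * g)).1 (hC.mul_notMem hf hg)

theorem aeval_aeval_sumElim_X_C (F : MvPolynomial (σ ⊕ τ) k) (a : σ → k) (b : τ → k) :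
    aeval a (aeval (Sum.elim X (C ∘ b)) F : MvPolynomial σ k) = aeval (Sum.elim a b) F := by
  rw [comp_aeval_apply]
  congr 2
  funext i
  cases i <;> simp

theorem aeval_aeval_sumElim_C_X (F : MvPolynomial (σ ⊕ τ) k) (a : σ → k) (b : τ → k) :
    aeval b (aeval (Sum.elim (C ∘ a) X) F : MvPolynomial τ k) = aeval (Sum.elim a b) F := by
  rw [comp_aeval_apply]
  congr 2
  funext i
  cases i <;> simp

-- Two polynomials that do not vanish identically on the product are made nonzero at a common
-- point by moving first along one factor and then along the other.
theorem isPrime_vanishingIdeal_image2_sumElim {C : Set (σ → k)} {D : Set (τ → k)}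
    (hC : (vanishingIdeal k C).IsPrime) (hD : (vanishingIdeal k D).IsPrime) :
    (vanishingIdeal k (image2 Sum.elim C D)).IsPrime := by
  have notMem_iff (F : MvPolynomial (σ ⊕ τ) k) : F ∉ vanishingIdeal k (image2 Sum.elim C D) ↔
      ∃ a ∈ C, ∃ b ∈ D, aeval (Sum.elim a b) F ≠ 0 := by
    simp [mem_vanishingIdeal_iff]
  constructor
  · obtain ⟨a, ha⟩ := nonempty_of_isPrime_vanishingIdeal hC
    obtain ⟨b, hb⟩ := nonempty_of_isPrime_vanishingIdeal hD
    exact (Ideal.ne_top_iff_one _).2 ((notMem_iff 1).2 ⟨a, ha, b, hb, by simp⟩)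
  · intro F G
    contrapose!
    simp only [notMem_iff]
    rintro ⟨⟨a₁, ha₁, b₁, hb₁, hF⟩, a₂, ha₂, b₂, hb₂, hG⟩
    rw [← aeval_aeval_sumElim_X_C] at hF hG
    obtain ⟨a, ha, hF', hG'⟩ :=
      exists_aeval_ne_zero_and_ne_zero hC ⟨a₁, ha₁, hF⟩ ⟨a₂, ha₂, hG⟩
    rw [aeval_aeval_sumElim_X_C, ← aeval_aeval_sumElim_C_X] at hF' hG'
    obtain ⟨b, hb, hFG⟩ := exists_aeval_ne_zero_and_ne_zero hD ⟨b₁, hb₁, hF'⟩ ⟨b₂, hb₂, hG'⟩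
    rw [aeval_aeval_sumElim_C_X, aeval_aeval_sumElim_C_X] at hFG
    exact ⟨a, ha, b, hb, by simpa using hFG⟩

theorem eval_map_sumAlgEquiv (F : MvPolynomial (ι ⊕ κ) k) (x : ι → k) (y : κ → k) :
    eval x (map (eval y) (sumAlgEquiv k ι κ F)) = aeval (Sum.elim x y) F := by
  induction F using MvPolynomial.induction_on with
  | C c => simp [sumAlgEquiv_C_inl]
  | add p q hp hq => simp only [map_add, hp, hq]
  | mul_X p j hp => cases j <;> simp [sumAlgEquiv_X_inl, sumAlgEquiv_X_inr, hp]

theorem algebraicIndependent_toCoordRing_sumElim {C : Set (σ → k)} {D : Set (τ → k)}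
    {p : ι → MvPolynomial σ k} {q : κ → MvPolynomial τ k}
    (hp : AlgebraicIndependent k (toCoordRing C ∘ p))
    (hq : AlgebraicIndependent k (toCoordRing D ∘ q)) :
    AlgebraicIndependent k (toCoordRing (image2 Sum.elim C D) ∘
      Sum.elim (rename Sum.inl ∘ p) (rename Sum.inr ∘ q)) := by
  rw [algebraicIndependent_toCoordRing_iff] at hp hq ⊢
  intro F hF
  have hF' : ∀ a ∈ C, ∀ b ∈ D, aeval (Sum.elim (aeval a ∘ p) (aeval b ∘ q)) F = 0 := by
    intro a ha b hb
    rw [← hF _ (mem_image2_of_mem ha hb)]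
    congr 2
    funext l
    cases l <;> simp [eval_rename]
  suffices sumAlgEquiv k ι κ F = 0 by simpa using this
  ext m : 1
  refine hq _ fun b hb => ?_
  have hmap : map (eval (aeval b ∘ q)) (sumAlgEquiv k ι κ F) = 0 :=
    hp _ fun a ha => (eval_map_sumAlgEquiv F _ _).trans (hF' a ha b hb)
  simpa [coeff_map] using congrArg (coeff m) hmap

theorem algebraicIndependent_toCoordRing_sub {C D : Set (σ → k)}
    (h : ∀ G : MvPolynomial σ k, (∀ a ∈ C, ∀ b ∈ D, aeval (a - b) G = 0) → G = 0) :
    AlgebraicIndependent k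
      (toCoordRing (image2 Sum.elim C D) ∘ fun i => X (Sum.inl i) - X (Sum.inr i)) := by
  rw [algebraicIndependent_toCoordRing_iff]
  refine fun G hG => h G fun a ha b hb => ?_
  simpa [Pi.sub_def, Function.comp_def] using hG _ (mem_image2_of_mem ha hb)

end CoordinateRing

section Transcendence

variable {k σ τ ι A : Type*} [CommRing A] [IsDomain A]

theorem isAlgebraic_adjoin_of_adjoin_union_eq_top [CommRing k] [Algebra k A] {s t : Set A}
    (hst : Algebra.adjoin k (s ∪ t) = ⊤) (ht : ∀ y ∈ t, IsAlgebraic (Algebra.adjoin k s) y) :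
    Algebra.IsAlgebraic (Algebra.adjoin k s) A := by
  let T := (Subalgebra.algebraicClosure (Algebra.adjoin k s) A).restrictScalars k
  have hT : Algebra.adjoin k (s ∪ t) ≤ T := by
    refine Algebra.adjoin_le (union_subset (fun y hy => ?_) ht)
    exact isAlgebraic_algebraMap (⟨y, Algebra.subset_adjoin hy⟩ : Algebra.adjoin k s)
  exact ⟨fun y => hT (hst ▸ Algebra.mem_top)⟩

theorem exists_transcendental_of_card_lt [Field k] [Algebra k A] [Fintype σ] [Fintype ι]
    {e : σ → A} {b : τ → A}
    (hgen : Algebra.adjoin k (range e ∪ range b) = ⊤) {y : ι → A}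
    (hy : AlgebraicIndependent k y) (hcard : Fintype.card σ < Fintype.card ι) :
    ∃ i, Transcendental (Algebra.adjoin k (range e)) (b i) := by
  by_contra! hb
  simp only [Transcendental, not_not] at hb
  have := isAlgebraic_adjoin_of_adjoin_union_eq_top hgen (forall_mem_range.2 hb)
  have hι : (Fintype.card ι : Cardinal) ≤ Algebra.trdeg k A := by
    simpa using hy.lift_cardinalMk_le_trdeg
  have hσ : Algebra.trdeg k A ≤ Fintype.card σ :=
    (Algebra.IsAlgebraic.trdeg_le_cardinalMk k (range e)).trans <| by
      simpa using Cardinal.mk_range_le_lift (f := e)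
  exact hcard.not_ge (by exact_mod_cast hι.trans hσ)

end Transcendence

section Place

variable {k ι K : Type*} [Field k] [Field K] [Algebra k K]

theorem algebraicIndependent_option_elim_inv {z : ι → K} {y : K}
    (h : AlgebraicIndependent k fun o : Option ι => o.elim y z) :
    AlgebraicIndependent k fun o : Option ι => o.elim y⁻¹ z := by
  rw [AlgebraicIndependent.option_iff] at h ⊢
  exact ⟨h.1, fun hy => h.2 (inv_inv y ▸ hy.inv)⟩

theorem exists_valuationSubring_sub_mem_nonunits {z : ι → K} (hz : AlgebraicIndependent k z)
    (p : ι → k) : ∃ V : ValuationSubring K, (∀ c, algebraMap k K c ∈ V) ∧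
      ∀ i, z i - algebraMap k K (p i) ∈ V.nonunits := by
  let J : Ideal (Algebra.adjoin k (range z)).toSubring :=
    RingHom.ker (((aeval p).comp hz.repr : Algebra.adjoin k (range z) →ₐ[k] k) :
      Algebra.adjoin k (range z) →+* k)
  obtain ⟨V, hV, hJV⟩ := Ideal.image_subset_nonunits_valuationSubring J (RingHom.ker_ne_top _)
  refine ⟨V, fun c => hV (Subalgebra.algebraMap_mem _ c), fun i => hJV ?_⟩
  refine ⟨hz.aevalEquiv (X i - C (p i)), ?_,
    (hz.algebraMap_aevalEquiv _).trans (by simp)⟩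
  change aeval p (hz.repr (hz.aevalEquiv _)) = 0
  simp [AlgebraicIndependent.repr]

theorem exists_place {z : ι → K} (hz : AlgebraicIndependent k z) (p : ι → k) :
    ∃ (V : ValuationSubring K) (_ : Algebra k V) (_ : IsScalarTower k V K) (z' : ι → V),
      (∀ i, (z' i : K) = z i) ∧
      ∀ i, z' i - algebraMap k V (p i) ∈ IsLocalRing.maximalIdeal V := by
  obtain ⟨V, hk, hzp⟩ := exists_valuationSubring_sub_mem_nonunits hz p
  have hzV (i : ι) : z i ∈ V := by
    simpa using V.add_mem _ _ (V.nonunits_subset (hzp i)) (hk (p i))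
  let _ : Algebra k V := ((algebraMap k K).codRestrict V.toSubring hk).toAlgebra
  exact ⟨V, inferInstance, .of_algebraMap_eq fun _ => rfl, fun i => ⟨z i, hzV i⟩, fun _ => rfl,
    fun i => ValuationSubring.coe_mem_nonunits_iff.1 (hzp i)⟩

end Place

section Limit

attribute [local instance] MvPolynomial.gradedAlgebra

variable {k σ K : Type*} [Field K]

-- The scaling factor is the inverse of a coordinate of maximal valuation.
theorem exists_smul_integral [Finite σ] (V : ValuationSubring K) {b : σ → K}
    (hb : ∃ i, b i ∉ V) :
    ∃ t ∈ IsLocalRing.maximalIdeal V, t ≠ 0 ∧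
      ∃ u : σ → V, (∃ j, u j = 1) ∧ ∀ i, (u i : K) = t * b i := by
  obtain ⟨i, hi⟩ := hb
  have : Nonempty σ := ⟨i⟩
  obtain ⟨j, hj⟩ := Finite.exists_max fun i => V.valuation (b i)
  have hone_lt : 1 < V.valuation (b j) :=
    (lt_of_not_ge fun h => hi ((V.valuation_le_one_iff _).1 h)).trans_le (hj i)
  have hbj : b j ≠ 0 := by
    intro h
    simp [h] at hone_lt
  have hinv_lt : V.valuation (b j)⁻¹ < 1 := by
    rw [map_inv₀]
    exact inv_lt_one_of_one_lt₀ hone_lt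
  have hu (i : σ) : (b j)⁻¹ * b i ∈ V := by
    rw [← V.valuation_le_one_iff, map_mul, map_inv₀,
      inv_mul_le_iff₀ (zero_lt_one.trans hone_lt), mul_one]
    exact hj i
  refine ⟨⟨(b j)⁻¹, (V.valuation_le_one_iff _).1 hinv_lt.le⟩, ?_, ?_,
    fun i => ⟨(b j)⁻¹ * b i, hu i⟩, ⟨j, Subtype.ext (inv_mul_cancel₀ hbj)⟩, fun i => rfl⟩
  · exact ValuationSubring.coe_mem_nonunits_iff.1 ((ValuationSubring.mem_nonunits_iff V).2 hinv_lt)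
  · exact fun h => inv_ne_zero hbj (congrArg Subtype.val h)

variable [CommRing k] [Algebra k K] {I : Ideal (MvPolynomial σ k)}

-- After rescaling by `t`, the two points become `u` and `u + t • ε`, whose reductions coincide;
-- the secant direction `ε` is divided by `t` and survives as a tangent vector at the reduction.
theorem exists_residue_dirDeriv_eq_zero [Fintype σ]
    (hI : I.IsHomogeneous (homogeneousSubmodule σ k)) (V : ValuationSubring K) [Algebra k V]
    [IsScalarTower k V K] {a b : σ → K} (ha : ∀ f ∈ I, aeval a f = 0)
    (hb : ∀ f ∈ I, aeval b f = 0) {ε : σ → V} (hε : ∀ i, (ε i : K) = a i - b i)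
    (hbV : ∃ i, b i ∉ V) :
    ∃ w : σ → IsLocalRing.ResidueField V, w ≠ 0 ∧ ∀ f ∈ I,
      aeval w f = 0 ∧ dirDeriv f w (IsLocalRing.residue V ∘ ε) = 0 := by
  obtain ⟨t, htm, ht, u, ⟨j, huj⟩, hu⟩ := exists_smul_integral V hbV
  have coe_aeval (x : σ → V) (f : MvPolynomial σ k) :
      algebraMap V K (aeval x f) = aeval (algebraMap V K ∘ x) f :=
    (aeval_algebraMap_apply K x f).symm
  have hu_zero : ∀ f ∈ I, aeval u f = 0 := by
    intro f hf
    have : algebraMap V K ∘ u = (t : K) • b := funext hu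
    apply FaithfulSMul.algebraMap_injective V K
    rw [coe_aeval, this, aeval_smul_eq_zero hI hb _ f hf, map_zero]
  have huε_zero : ∀ f ∈ I, aeval (u + t • ε) f = 0 := by
    intro f hf
    have : algebraMap V K ∘ (u + t • ε) = (t : K) • a := by
      funext i
      change (u i : K) + t * ε i = t * a i
      rw [hu, hε]
      ring
    apply FaithfulSMul.algebraMap_injective V K
    rw [coe_aeval, this, aeval_smul_eq_zero hI ha _ f hf, map_zero]
  let ρ : V →ₐ[k] IsLocalRing.ResidueField V := IsScalarTower.toAlgHom k V _
  refine ⟨ρ ∘ u, fun h => one_ne_zero (α := IsLocalRing.ResidueField V) ?_, fun f hf => ⟨?_, ?_⟩⟩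
  · simpa [huj] using congrFun h j
  · have := comp_aeval_apply u ρ f
    rw [hu_zero f hf, map_zero] at this
    exact this.symm
  · obtain ⟨h, e⟩ := dvd_dirDeriv_of_aeval_eq_zero ht (hu_zero f hf) (huε_zero f hf)
    have hρt : ρ t = 0 := (IsLocalRing.residue_eq_zero_iff t).2 htm
    have := map_dirDeriv ρ f u ε
    rw [e, map_mul, hρt, zero_mul] at this
    exact this.symm

end Limit

section Nullstellensatz

variable {k σ L : Type*} [Field k] [IsAlgClosed k]

theorem exists_mem_zeroLocus_ne_zero [Finite σ] [CommRing L] [IsReduced L] [Algebra k L]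
    {J : Ideal (MvPolynomial σ k)} {w : σ → L} (hw : w ≠ 0) (hJ : ∀ f ∈ J, aeval w f = 0) :
    ∃ u ∈ zeroLocus k J, u ≠ 0 := by
  by_contra! h
  refine hw (funext fun i => ?_)
  have hX : X i ∈ J.radical := by
    rw [← vanishingIdeal_zeroLocus_eq_radical (K := k)]
    intro u hu
    simp [h u hu]
  obtain ⟨d, hd⟩ := hX
  exact eq_zero_of_pow_eq_zero (by simpa using hJ _ hd)

theorem exists_mem_zeroLocus_dirDeriv_eq_zero [Fintype σ] [CommRing L] [IsReduced L] [Algebra k L]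
    {I : Ideal (MvPolynomial σ k)} {w : σ → L} (hw : w ≠ 0) (e : σ → k)
    (hI : ∀ f ∈ I, aeval w f = 0 ∧ dirDeriv f w (algebraMap k L ∘ e) = 0) :
    ∃ u ∈ zeroLocus k I, u ≠ 0 ∧ ∀ f ∈ I, dirDeriv f u e = 0 := by
  let D (f : MvPolynomial σ k) : MvPolynomial σ k := dirDeriv f X (C ∘ e)
  have hJ : Ideal.span (I ∪ D '' I) ≤ RingHom.ker (aeval w : MvPolynomial σ k →ₐ[k] L) := by
    rw [Ideal.span_le, union_subset_iff, image_subset_iff]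
    exact ⟨fun f hf => (hI f hf).1, fun f hf => (aeval_dirDeriv_X w f e).trans (hI f hf).2⟩
  obtain ⟨u, hu, hu0⟩ := exists_mem_zeroLocus_ne_zero hw hJ
  refine ⟨u, fun f hf => hu f (Ideal.subset_span (.inl hf)), hu0, fun f hf => ?_⟩
  exact (aeval_dirDeriv_X u f e).symm.trans (hu _ (Ideal.subset_span (.inr ⟨f, hf, rfl⟩)))

end Nullstellensatz

section AffineCone

variable {k σ ι : Type*} [Field k]

theorem adjoin_range_sub_union_range_eq_top (S : Set (σ ⊕ σ → k)) :
    Algebra.adjoin k ((range fun i => toCoordRing S (X (Sum.inl i) - X (Sum.inr i))) ∪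
      range fun i => toCoordRing S (X (Sum.inr i))) = ⊤ := by
  set T := Algebra.adjoin k ((range fun i => toCoordRing S (X (Sum.inl i) - X (Sum.inr i))) ∪
    range fun i => toCoordRing S (X (Sum.inr i)))
  have hsub (i : σ) : toCoordRing S (X (Sum.inl i) - X (Sum.inr i)) ∈ T :=
    Algebra.subset_adjoin (.inl (mem_range_self i))
  have hinr (i : σ) : toCoordRing S (X (Sum.inr i)) ∈ T :=
    Algebra.subset_adjoin (.inr (mem_range_self i))
  rw [eq_top_iff, ← (AlgHom.range_eq_top _).2 (toCoordRing_surjective S), ← Algebra.map_top,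
    ← adjoin_range_X, AlgHom.map_adjoin, Algebra.adjoin_le_iff, image_subset_iff,
    range_subset_iff, Sum.forall]
  refine ⟨fun i => ?_, hinr⟩
  simpa using add_mem (hsub i) (hinr i)

theorem exists_algebraicIndependent_option_sub [Fintype σ] [Fintype ι] {C : Set (σ → k)}
    (hC : (vanishingIdeal k C).IsPrime) {y : ι → CoordRing C} (hy : AlgebraicIndependent k y)
    (hcard : Fintype.card σ < 2 * Fintype.card ι)
    (hsub : ∀ G : MvPolynomial σ k, (∀ a ∈ C, ∀ b ∈ C, aeval (a - b) G = 0) → G = 0) :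
    ∃ i, AlgebraicIndependent k fun o : Option σ => o.elim
      (toCoordRing (image2 Sum.elim C C) (X (Sum.inr i)))
      fun j => toCoordRing (image2 Sum.elim C C) (X (Sum.inl j) - X (Sum.inr j)) := by
  have := isPrime_vanishingIdeal_image2_sumElim hC hC
  obtain ⟨p, rfl⟩ := (toCoordRing_surjective C).comp_left y
  obtain ⟨i, hi⟩ := exists_transcendental_of_card_lt (adjoin_range_sub_union_range_eq_top _)
    (algebraicIndependent_toCoordRing_sumElim hy hy) (by simpa [two_mul] using hcard)
  exact ⟨i, AlgebraicIndependent.option_iff.2 ⟨algebraicIndependent_toCoordRing_sub hsub, hi⟩⟩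

attribute [local instance] MvPolynomial.gradedAlgebra

variable [IsAlgClosed k] [Fintype σ]

theorem exists_mem_zeroLocus_of_algebraicIndependent {K : Type*} [Field K] [Algebra k K]
    {I : Ideal (MvPolynomial σ k)} (hI : I.IsHomogeneous (homogeneousSubmodule σ k))
    {a b : σ → K} (ha : ∀ f ∈ I, aeval a f = 0) (hb : ∀ f ∈ I, aeval b f = 0) {i : σ}
    (hab : AlgebraicIndependent k fun o : Option σ => o.elim (b i) (a - b)) (e : σ → k) :
    ∃ u ∈ zeroLocus k I, u ≠ 0 ∧ ∀ f ∈ I, dirDeriv f u e = 0 := by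
  -- A place at which `b i` has a pole and `a - b` takes the value `e`.
  obtain ⟨V, _, _, z, hz, hze⟩ :=
    exists_place (algebraicIndependent_option_elim_inv hab) fun o => o.elim 0 e
  have hbi : b i ∉ V := by
    intro hbi
    have hunit : IsUnit (z none) := by
      refine IsUnit.of_mul_eq_one ⟨b i, hbi⟩ (Subtype.ext ?_)
      exact (congrArg (· * b i) (hz none)).trans
        (inv_mul_cancel₀ (hab.ne_zero none))
    exact (IsLocalRing.mem_maximalIdeal _).1 (by simpa using hze none) hunit
  obtain ⟨w, hw, hwI⟩ := exists_residue_dirDeriv_eq_zero hI V ha hb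
    (ε := fun j => z (some j)) (fun j => hz (some j)) ⟨i, hbi⟩
  have hres : (IsLocalRing.residue V ∘ fun j => z (some j)) =
      algebraMap k (IsLocalRing.ResidueField V) ∘ e := by
    funext j
    exact Ideal.Quotient.eq.2 (hze (some j))
  exact exists_mem_zeroLocus_dirDeriv_eq_zero hw e (hres ▸ hwI)

theorem exists_mem_zeroLocus_of_algebraicIndependent_of_isDomain {A : Type*} [CommRing A]
    [IsDomain A] [Algebra k A] {I : Ideal (MvPolynomial σ k)}
    (hI : I.IsHomogeneous (homogeneousSubmodule σ k)) {a b : σ → A}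
    (ha : ∀ f ∈ I, aeval a f = 0) (hb : ∀ f ∈ I, aeval b f = 0) {i : σ}
    (hab : AlgebraicIndependent k fun o : Option σ => o.elim (b i) (a - b)) (e : σ → k) :
    ∃ u ∈ zeroLocus k I, u ≠ 0 ∧ ∀ f ∈ I, dirDeriv f u e = 0 := by
  have map_zero_of {x : σ → A} (hx : ∀ f ∈ I, aeval x f = 0) :
      ∀ f ∈ I, aeval (algebraMap A (FractionRing A) ∘ x) f = 0 := by
    intro f hf
    rw [aeval_algebraMap_apply, hx f hf, map_zero]
  have helim : (fun o : Option σ => o.elim (algebraMap A (FractionRing A) (b i))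
      (algebraMap A (FractionRing A) ∘ a - algebraMap A (FractionRing A) ∘ b)) =
      algebraMap A (FractionRing A) ∘ fun o => o.elim (b i) (a - b) := by
    ext (_ | j) <;> simp
  refine exists_mem_zeroLocus_of_algebraicIndependent hI (map_zero_of ha) (map_zero_of hb)
    (i := i) ?_ e
  exact helim ▸ hab.map' (f := IsScalarTower.toAlgHom k A (FractionRing A))
    (IsFractionRing.injective A (FractionRing A))

theorem exists_mem_zeroLocus_of_two_mul_card_lt [Fintype ι] {C : Set (σ → k)}
    (hC : (vanishingIdeal k C).IsPrime)
    (hhom : (vanishingIdeal k C).IsHomogeneous (homogeneousSubmodule σ k))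
    {y : ι → CoordRing C} (hy : AlgebraicIndependent k y)
    (hcard : Fintype.card σ < 2 * Fintype.card ι)
    (hsub : ∀ G : MvPolynomial σ k, (∀ a ∈ C, ∀ b ∈ C, aeval (a - b) G = 0) → G = 0)
    (e : σ → k) :
    ∃ u ∈ zeroLocus k (vanishingIdeal k C), u ≠ 0 ∧
      ∀ f ∈ vanishingIdeal k C, dirDeriv f u e = 0 := by
  have := isPrime_vanishingIdeal_image2_sumElim hC hC
  obtain ⟨i, hi⟩ := exists_algebraicIndependent_option_sub hC hy hcard hsub
  have ha := aeval_toCoordRing_X_eq_zero (S := image2 Sum.elim C C) (C := C) Sum.inl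
    (by rintro _ ⟨a, ha, b, _, rfl⟩; exact ha)
  have hb := aeval_toCoordRing_X_eq_zero (S := image2 Sum.elim C C) (C := C) Sum.inr
    (by rintro _ ⟨a, _, b, hb, rfl⟩; exact hb)
  refine exists_mem_zeroLocus_of_algebraicIndependent_of_isDomain hhom ha hb (i := i) ?_ e
  simpa only [Pi.sub_def, map_sub] using hi

end AffineCone

section KrullDimension

theorem krullDim_add_one_le_of_strictMono {α β : Type*} [Preorder α] [Preorder β] {f : α → β}
    (hf : StrictMono f) {b : β} (hb : ∀ a, b < f a) :
    Order.krullDim α + 1 ≤ Order.krullDim β := by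
  cases isEmpty_or_nonempty α
  · rw [Order.krullDim_eq_bot, WithBot.bot_add]
    exact bot_le
  · have hmono : StrictMono (WithBot.recBotCoe b f : WithBot α → β) := by
      rintro (_ | x) (_ | y) hxy
      · exact (lt_irrefl _ hxy).elim
      · exact hb y
      · exact (WithBot.not_lt_bot _ hxy).elim
      · exact hf (WithBot.coe_lt_coe.1 hxy)
    exact Order.krullDim_withBot.symm.trans_le (Order.krullDim_le_of_strictMono _ hmono)

theorem ringKrullDim_le_of_isIntegral {R S : Type*} [CommRing R] [CommRing S] {f : R →+* S}
    (hf : f.IsIntegral) : ringKrullDim S ≤ ringKrullDim R := by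
  let _ := f.toAlgebra
  have : Algebra.IsIntegral R S := ⟨hf⟩
  exact Order.krullDim_le_of_strictMono (PrimeSpectrum.comap f) fun _ _ h =>
    Ideal.IsIntegral.comap_lt_comap h

theorem exists_algebraicIndependent_ringKrullDim_le (k A : Type*) [Field k] [CommRing A]
    [Nontrivial A] [Algebra k A] [Algebra.FiniteType k A] :
    ∃ (s : ℕ) (y : Fin s → A), AlgebraicIndependent k y ∧ ringKrullDim A ≤ s := by
  obtain ⟨s, g, hg, hint⟩ := exists_integral_inj_algHom_of_fg k A
  refine ⟨s, g ∘ X, (algebraicIndependent_X (Fin s) k).map' hg, ?_⟩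
  calc ringKrullDim A ≤ ringKrullDim (MvPolynomial (Fin s) k) := ringKrullDim_le_of_isIntegral hint
    _ = s := by simp [MvPolynomial.ringKrullDim_of_isNoetherianRing]

end KrullDimension

section LineRestriction

variable {σ k : Type*} [CommRing k]

/-- Restriction of a polynomial to the line through the origin spanned by `v`, as a polynomial
in the parameter `t` of the point `t • v`. -/
def lineRestriction (v : σ → k) : MvPolynomial σ k →ₐ[k] Polynomial k :=
  aeval fun i => Polynomial.C (v i) * Polynomial.X

theorem eval_lineRestriction (v : σ → k) (f : MvPolynomial σ k) (t : k) :
    (lineRestriction v f).eval t = aeval (t • v) f := by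
  rw [lineRestriction, ← Polynomial.coe_aeval_eq_eval, comp_aeval_apply]
  congr 2
  funext i
  simp only [Polynomial.coe_aeval_eq_eval, Polynomial.eval_mul, Polynomial.eval_C,
    Polynomial.eval_X, Pi.smul_apply, smul_eq_mul, mul_comm]

theorem lineRestriction_of_isHomogeneous (v : σ → k) {f : MvPolynomial σ k} {d : ℕ}
    (hf : f.IsHomogeneous d) : lineRestriction v f = Polynomial.monomial d (aeval v f) := by
  have hv : (fun i => Polynomial.C (v i) * Polynomial.X) =
      (Polynomial.X : Polynomial k) • (Polynomial.C ∘ v : σ → Polynomial k) :=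
    funext fun i => mul_comm _ _
  have hC : aeval (Polynomial.C ∘ v) f = Polynomial.C (aeval v f) :=
    aeval_algebraMap_apply (Polynomial k) v f
  rw [lineRestriction, hv, aeval_smul_of_isHomogeneous hf, hC, mul_comm,
    Polynomial.C_mul_X_pow_eq_monomial]

theorem coeff_lineRestriction (v : σ → k) (f : MvPolynomial σ k) (d : ℕ) :
    (lineRestriction v f).coeff d = aeval v (homogeneousComponent d f) := by
  conv_lhs => rw [← sum_homogeneousComponent f]
  simp only [map_sum, Polynomial.finsetSum_coeff, Polynomial.coeff_monomial,
    lineRestriction_of_isHomogeneous v (homogeneousComponent_isHomogeneous _ f),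
    Finset.sum_ite_eq', Finset.mem_range]
  split_ifs with hd
  · rfl
  · rw [homogeneousComponent_eq_zero _ _ (by simpa using hd), map_zero]

theorem lineRestriction_eq_zero_iff [IsDomain k] [Infinite k] {v : σ → k}
    {f : MvPolynomial σ k} :
    lineRestriction v f = 0 ↔ ∀ t : k, t ≠ 0 → aeval (t • v) f = 0 := by
  refine ⟨fun h t _ => by rw [← eval_lineRestriction, h, Polynomial.eval_zero], fun h => ?_⟩
  refine Polynomial.eq_zero_of_infinite_isRoot _ ((finite_singleton 0).infinite_compl.mono ?_)
  exact fun t ht => (eval_lineRestriction v f t).trans (h t ht)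

end LineRestriction

section ProjectiveSets

variable {n : ℕ} {Y Z : Set (PrV n)}

theorem mk_mem_pZero_iff {v : Fin n → ℂ} (hv : v ≠ 0) {f : MvPolynomial (Fin n) ℂ} :
    Projectivization.mk ℂ v hv ∈ pZero f ↔ lineRestriction v f = 0 := by
  rw [lineRestriction_eq_zero_iff]
  constructor
  · exact fun h t ht => h (t • v) (smul_ne_zero ht hv)
      ((Projectivization.mk_eq_mk_iff' ℂ _ _ _ _).2 ⟨t, rfl⟩)
  · intro h w hw hwv
    obtain ⟨t, rfl⟩ := (Projectivization.mk_eq_mk_iff' ℂ _ _ _ _).1 hwv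
    exact h t (left_ne_zero_of_smul hw)

theorem mem_pZero_iff {x : PrV n} {f : MvPolynomial (Fin n) ℂ} :
    x ∈ pZero f ↔ lineRestriction x.rep f = 0 := by
  rw [← mk_mem_pZero_iff x.rep_nonzero, Projectivization.mk_rep]

theorem pZero_one : pZero (1 : MvPolynomial (Fin n) ℂ) = ∅ := by
  ext x
  simp [mem_pZero_iff]

theorem pZero_mul (f g : MvPolynomial (Fin n) ℂ) : pZero (f * g) = pZero f ∪ pZero g := by
  ext x
  simp [mem_pZero_iff]

theorem isClosed_pZero (f : MvPolynomial (Fin n) ℂ) : IsClosed (pZero f) :=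
  ⟨TopologicalSpace.isOpen_generateFrom_of_mem ⟨f, rfl⟩⟩

theorem isTopologicalBasis_compl_pZero :
    TopologicalSpace.IsTopologicalBasis
      {U : Set (PrV n) | ∃ f : MvPolynomial (Fin n) ℂ, U = (pZero f)ᶜ} := by
  refine TopologicalSpace.isTopologicalBasis_of_subbasis_of_finiteInter rfl
    ⟨⟨1, by rw [pZero_one, compl_empty]⟩, ?_⟩
  rintro _ ⟨f, rfl⟩ _ ⟨g, rfl⟩
  exact ⟨f * g, by rw [pZero_mul, compl_union]⟩

theorem mem_of_forall_mem_pZero (hY : IsClosed Y) {x : PrV n}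
    (hx : ∀ f ∈ idealOf Y, x ∈ pZero f) : x ∈ Y := by
  by_contra hxY
  obtain ⟨_, ⟨f, rfl⟩, hxf, hfY⟩ :=
    isTopologicalBasis_compl_pZero.exists_subset_of_mem_open hxY hY.isOpen_compl
  exact hxf (hx f (compl_subset_compl.1 hfY))

theorem isPrime_idealOf (hY : IsIrreducible Y) : (idealOf Y).IsPrime := by
  constructor
  · intro h
    have : Y ⊆ pZero 1 := (Ideal.eq_top_iff_one _).1 h
    exact hY.nonempty.not_subset_empty (pZero_one ▸ this)
  · intro f g hfg
    have : Y ⊆ pZero f ∪ pZero g := pZero_mul f g ▸ hfg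
    exact isPreirreducible_iff_isClosed_union_isClosed.1 hY.2 _ _ (isClosed_pZero f)
      (isClosed_pZero g) this

theorem idealOf_lt_idealOf (hY : IsClosed Y) (h : Y ⊂ Z) : idealOf Z < idealOf Y :=
  lt_of_le_not_ge (fun _ hf => h.subset.trans hf) fun hle =>
    h.not_subset fun _ hx => mem_of_forall_mem_pZero hY fun _ hf => hle hf hx

attribute [local instance] MvPolynomial.gradedAlgebra

theorem isHomogeneous_idealOf (Y : Set (PrV n)) :
    (idealOf Y).IsHomogeneous (homogeneousSubmodule (Fin n) ℂ) := by
  refine isHomogeneous_of_homogeneousComponent_mem fun f hf d x hx => ?_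
  rw [mem_pZero_iff, lineRestriction_of_isHomogeneous _ (homogeneousComponent_isHomogeneous d f),
    ← coeff_lineRestriction, mem_pZero_iff.1 (hf hx), Polynomial.coeff_zero, map_zero]

theorem mk_mem_of_mem_zeroLocus (hY : IsClosed Y) {u : Fin n → ℂ} (hu : u ≠ 0)
    (huY : u ∈ zeroLocus ℂ (idealOf Y)) : Projectivization.mk ℂ u hu ∈ Y :=
  mem_of_forall_mem_pZero hY fun f hf => (mk_mem_pZero_iff hu).2 <|
    lineRestriction_eq_zero_iff.2 fun t _ =>
      aeval_smul_eq_zero (isHomogeneous_idealOf Y) huY t f hf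

/-- The affine cone over `Y`; it contains the origin even when `Y` is empty. -/
def affineCone (Y : Set (PrV n)) : Set (Fin n → ℂ) :=
  {v | ∀ hv : v ≠ 0, Projectivization.mk ℂ v hv ∈ Y}

theorem zero_mem_affineCone (Y : Set (PrV n)) : 0 ∈ affineCone Y :=
  fun h => (h rfl).elim

theorem smul_rep_mem_affineCone {x : PrV n} (hx : x ∈ Y) (c : ℂ) : c • x.rep ∈ affineCone Y := by
  intro hc
  have : Projectivization.mk ℂ (c • x.rep) hc = x :=
    ((Projectivization.mk_eq_mk_iff' ℂ _ _ hc x.rep_nonzero).2 ⟨c, rfl⟩).trans x.mk_rep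
  rwa [this]

theorem vanishingIdeal_affineCone (hY : Y.Nonempty) :
    vanishingIdeal ℂ (affineCone Y) = idealOf Y := by
  ext f
  constructor
  · rintro h x hx v hv rfl
    exact h v fun _ => hx
  · intro h v hv
    by_cases hv0 : v = 0
    · obtain ⟨x, hx⟩ := hY
      have := eval_lineRestriction x.rep f 0
      rw [mem_pZero_iff.1 (h hx), Polynomial.eval_zero, zero_smul] at this
      rw [hv0, ← this]
    · exact h (hv hv0) v hv0 rfl

theorem idealOf_lt_vanishingIdeal_zero (hY : Y.Nonempty) :
    idealOf Y < vanishingIdeal ℂ {(0 : Fin n → ℂ)} := by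
  refine lt_of_le_not_ge ?_ fun h => ?_
  · rw [← vanishingIdeal_affineCone hY]
    exact vanishingIdeal_anti_mono (singleton_subset_iff.2 (zero_mem_affineCone Y))
  · obtain ⟨x, hx⟩ := hY
    refine x.rep_nonzero (funext fun i => ?_)
    have : X i ∈ vanishingIdeal ℂ {(0 : Fin n → ℂ)} := by simp
    simpa using h this hx x.rep x.rep_nonzero x.mk_rep

-- Prolong the chain of cones over the irreducible closed subsets of `Y` by the vertex.
theorem pdim_add_one_le_ringKrullDim (hY : IsClosed Y) (hne : Y.Nonempty) :
    pdim Y + 1 ≤ ringKrullDim (CoordRing (affineCone Y)) := by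
  let ι : TopologicalSpace.IrreducibleCloseds Y → TopologicalSpace.IrreducibleCloseds (PrV n) :=
    TopologicalSpace.IrreducibleCloseds.map Subtype.val continuous_subtype_val
  have hιY (W) : (ι W : Set (PrV n)) ⊆ Y :=
    closure_minimal (Subtype.coe_image_subset Y W) hY
  have hι : StrictMono ι :=
    TopologicalSpace.IrreducibleCloseds.map_strictMono_of_isInducing .subtypeVal
  rw [ringKrullDim_quotient, vanishingIdeal_affineCone hne, ← Order.krullDim_orderDual]
  exact krullDim_add_one_le_of_strictMono
    (f := fun W => OrderDual.toDual ⟨⟨idealOf (ι W), isPrime_idealOf (ι W).isIrreducible⟩,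
      fun _ hf => (hιY W).trans hf⟩)
    (b := OrderDual.toDual ⟨⟨vanishingIdeal ℂ {(0 : Fin n → ℂ)}, inferInstance⟩,
      (idealOf_lt_vanishingIdeal_zero hne).le⟩)
    (fun W W' h => idealOf_lt_idealOf (ι W).isClosed (hι h))
    fun W => idealOf_lt_vanishingIdeal_zero (ι W).isIrreducible.nonempty

theorem eq_zero_of_secantVariety_eq_univ (hY : secantVariety Y = univ)
    {G : MvPolynomial (Fin n) ℂ}
    (hG : ∀ a ∈ affineCone Y, ∀ b ∈ affineCone Y, aeval (a - b) G = 0) : G = 0 := by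
  have hpZero : secantVariety Y ⊆ pZero G := by
    refine closure_minimal ?_ (isClosed_pZero G)
    simp only [iUnion_subset_iff]
    intro x hx y hy _ z hz
    obtain ⟨α, β, hαβ⟩ := Submodule.mem_span_pair.1 hz
    rw [mem_pZero_iff, lineRestriction_eq_zero_iff]
    intro t _
    have : t • z.rep = (t * α) • x.rep - (-(t * β)) • y.rep := by
      rw [← hαβ]
      module
    rw [this]
    exact hG _ (smul_rep_mem_affineCone hx _) _ (smul_rep_mem_affineCone hy _)
  refine MvPolynomial.funext fun v => ?_
  by_cases hv : v = 0
  · simpa [hv, aeval_eq_eval] using hG 0 (zero_mem_affineCone Y) 0 (zero_mem_affineCone Y)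
  · simpa using hpZero (hY ▸ mem_univ (Projectivization.mk ℂ v hv)) v hv rfl

theorem mem_projTangent_iff {x z : PrV n} :
    z ∈ projTangent Y x ↔ ∀ f ∈ idealOf Y, dirDeriv f x.rep z.rep = 0 := by
  have jacLin_eq (f : MvPolynomial (Fin n) ℂ) :
      jacLin f x.rep z.rep = dirDeriv f x.rep z.rep := by
    simp [jacLin, dirDeriv, aeval_eq_eval, mul_comm]
  simp only [projTangent, projSub, affTangent, mem_ofPred_eq, Submodule.mem_iInf,
    LinearMap.mem_ker, jacLin_eq]
  rfl

theorem mem_projTangent_mk {u : Fin n → ℂ} (hu : u ≠ 0) {z : PrV n}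
    (hz : ∀ f ∈ idealOf Y, dirDeriv f u z.rep = 0) :
    z ∈ projTangent Y (Projectivization.mk ℂ u hu) := by
  obtain ⟨c, hc⟩ := Projectivization.exists_smul_eq_mk_rep ℂ u hu
  rw [mem_projTangent_iff, ← hc]
  exact dirDeriv_smul_eq_zero (isHomogeneous_idealOf Y) hz c

end ProjectiveSets

/-- **(Consequence of the Fulton–Hansen connectedness theorem.)**  Let `Y ⊆ ℙ^r` be an
irreducible, non-projectable `m`-dimensional subvariety with `2m ≥ r`.  Then
`f(π⁻¹(E_Y)) = ℙ^r`: the union of the embedded tangent spaces (= union of the embedded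
tangent lines, the limits of secant lines at coincident pairs of points) of `Y` is all of
`ℙ^r`. -/
theorem tangent_lines_fill_space
    (r m : ℕ) (Y : Set (Pr r))
    (hcl : IsClosed Y) (hirr : IsIrreducible Y)
    (hdim : pdim Y = ((m : ℕ∞) : WithBot ℕ∞))
    (hnonproj : secantVariety Y = Set.univ)
    (hr : r ≤ 2 * m) :
    ⋃ y ∈ Y, projTangent Y y = Set.univ := by
  have hprime := isPrime_idealOf hirr
  have hhom := isHomogeneous_idealOf Y
  have hcone := vanishingIdeal_affineCone hirr.nonempty
  rw [← hcone] at hprime hhom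
  obtain ⟨s, y, hy, hs⟩ :=
    exists_algebraicIndependent_ringKrullDim_le ℂ (CoordRing (affineCone Y))
  have hms : m + 1 ≤ s := by
    have := (pdim_add_one_le_ringKrullDim hcl hirr.nonempty).trans hs
    rw [hdim] at this
    exact_mod_cast this
  refine eq_univ_of_forall fun z => ?_
  obtain ⟨u, hu, hu0, hz⟩ := exists_mem_zeroLocus_of_two_mul_card_lt hprime hhom hy
    (by simp only [Fintype.card_fin]; lia)
    (fun _ => eq_zero_of_secantVariety_eq_univ hnonproj) z.rep
  rw [hcone] at hu hz
  exact mem_biUnion (mk_mem_of_mem_zeroLocus hcl hu0 hu) (mem_projTangent_mk hu0 hz)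

end
end
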